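/- arXiv:1603.07113 — 8 statements merged into one kernel-verified Lean document; each statement's English description precedes it below -/
import Mathlib

section
/- If f is a close-to-convex function on the unit disk with Taylor coefficients a_k, then the Zalcman functional for n = 3 satisfies |a_3² − a_5| ≤ (5 + 3√3)/2. -/
open Complex Metric

/-- The k-th Taylor coefficient of `f` at `0`: `a_k = f^{(k)}(0)/k!`. -/
noncomputable def taylorCoeff (f : ℂ → ℂ) (k : ℕ) : ℂ :=
  iteratedDeriv k f 0 / (Nat.factorial k)

/-- `g` is a (normalized) starlike function on the unit disk. -/
def IsStarlikeFn (g : ℂ → ℂ) : Prop :=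
  DifferentiableOn ℂ g (ball (0 : ℂ) 1) ∧ g 0 = 0 ∧ deriv g 0 = 1 ∧
    ∀ z ∈ ball (0 : ℂ) 1 \ {0}, 0 < (z * deriv g z / g z).re

/-- `f` is a (normalized) close-to-convex function on the unit disk. -/
def IsCloseToConvex (f : ℂ → ℂ) : Prop :=
  DifferentiableOn ℂ f (ball (0 : ℂ) 1) ∧ f 0 = 0 ∧ deriv f 0 = 1 ∧
    ∃ θ : ℝ, ∃ g : ℂ → ℂ, IsStarlikeFn g ∧
      ∀ z ∈ ball (0 : ℂ) 1 \ {0},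
        0 < (Complex.exp (θ * Complex.I) * z * deriv f z / g z).re

/-!
By Marx and Strohhäcker a starlike `g` is `z h(z) ^ 2` with `h(0) = 1` and `Re h > 1/2`, so a
close-to-convex `f` satisfies `f' = p h ^ 2` with `p(0) = 1` and `Re (e^{iθ} p) > 0`. By Herglotz,
`h` is a mean of the functions `1 / (1 - u z)` and `p` a mean of the functions
`(1 + x z) / (1 - u z)`, with `|u| = |x| = 1`. Feynman's parametrisation and the maximum principle
then merge the three factors: `f'` is a mean of the functions `(1 + x z) / (1 - v z) ^ 3`, with
`|x| = |v| = 1`.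

For a suitable unimodular `η`,
`|a₃² - a₅| = Re ((η a₃) ^ 2 - η ^ 2 a₅) ≤ max_t (2 t Re (η a₃) - t ^ 2) - Re (η ^ 2 a₅)`. For fixed
`η` and `t` the right-hand side is linear in `f'`, so only the functions `(1 + x z) / (1 - v z) ^ 3`
have to be considered, and the theorem becomes an inequality for two unimodular numbers.
-/

section CoeffHull

open scoped PowerSeries Pointwise
open PowerSeries (coeff)

/-- The linear functionals on power series that depend on finitely many coefficients, i.e. the
continuous ones for coefficientwise convergence. -/
def coeffFunctionals : Submodule ℂ (ℂ⟦X⟧ →ₗ[ℂ] ℂ) :=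
  Submodule.span ℂ (Set.range coeff)

/-- The closed convex hull of a set of power series for coefficientwise convergence, encoded as the
intersection of the closed half-spaces containing the set. -/
def coeffHull (S : Set ℂ⟦X⟧) : Set ℂ⟦X⟧ :=
  {φ | ∀ Λ ∈ coeffFunctionals, ∀ C : ℝ, (∀ ψ ∈ S, (Λ ψ).re ≤ C) → (Λ φ).re ≤ C}

variable {S T : Set ℂ⟦X⟧} {φ ψ : ℂ⟦X⟧} {Λ : ℂ⟦X⟧ →ₗ[ℂ] ℂ}

lemma coeff_mem_coeffFunctionals (k : ℕ) : coeff k ∈ coeffFunctionals :=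
  Submodule.subset_span ⟨k, rfl⟩

lemma exists_eq_sum_coeff (hΛ : Λ ∈ coeffFunctionals) :
    ∃ (s : Finset ℕ) (c : ℕ → ℂ), ∀ φ, Λ φ = ∑ k ∈ s, c k * coeff k φ := by
  obtain ⟨c, rfl⟩ := Finsupp.mem_span_range_iff_exists_finsupp.1 hΛ
  exact ⟨c.support, c, fun φ => by simp [Finsupp.sum]⟩

lemma coeffFunctionals_comp_mulLeft (φ : ℂ⟦X⟧) (hΛ : Λ ∈ coeffFunctionals) :
    Λ ∘ₗ LinearMap.mulLeft ℂ φ ∈ coeffFunctionals := by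
  suffices coeffFunctionals ≤ coeffFunctionals.comap (LinearMap.lcomp ℂ ℂ (LinearMap.mulLeft ℂ φ))
    from this hΛ
  refine Submodule.span_le.2 (Set.range_subset_iff.2 fun k => ?_)
  have hk : LinearMap.lcomp ℂ ℂ (LinearMap.mulLeft ℂ φ) (coeff k) =
      ∑ p ∈ Finset.HasAntidiagonal.antidiagonal k, coeff p.1 φ • coeff p.2 := by
    ext ψ
    simp [PowerSeries.coeff_mul]
  rw [SetLike.mem_coe, Submodule.mem_comap, hk]
  exact sum_mem fun p _ => Submodule.smul_mem _ _ (coeff_mem_coeffFunctionals p.2)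

lemma subset_coeffHull : S ⊆ coeffHull S := fun φ hφ _ _ _ hC => hC φ hφ

lemma coeffHull_subset_coeffHull (h : S ⊆ coeffHull T) : coeffHull S ⊆ coeffHull T :=
  fun _ hφ Λ hΛ C hC => hφ Λ hΛ C fun _ hψ => h hψ Λ hΛ C hC

lemma coeffHull_mono (h : S ⊆ T) : coeffHull S ⊆ coeffHull T :=
  coeffHull_subset_coeffHull (h.trans subset_coeffHull)

lemma mul_mem_coeffHull (hφ : φ ∈ coeffHull S) (hψ : ψ ∈ coeffHull T) :
    φ * ψ ∈ coeffHull (S * T) := by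
  intro Λ hΛ C hC
  refine hψ _ (coeffFunctionals_comp_mulLeft φ hΛ) C fun τ hτ => ?_
  rw [LinearMap.comp_apply, LinearMap.mulLeft_apply, mul_comm]
  refine hφ _ (coeffFunctionals_comp_mulLeft τ hΛ) C fun σ hσ => ?_
  rw [LinearMap.comp_apply, LinearMap.mulLeft_apply, mul_comm]
  exact hC _ (Set.mul_mem_mul hσ hτ)

lemma add_mem_coeffHull (hφ : φ ∈ coeffHull S) (hψ : ψ ∈ coeffHull T) :
    φ + ψ ∈ coeffHull (S + T) := by
  intro Λ hΛ C hC
  have hright : ∀ σ ∈ S, (Λ ψ).re ≤ C - (Λ σ).re := fun σ hσ =>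
    hψ Λ hΛ _ fun τ hτ => by
      have := hC _ (Set.add_mem_add hσ hτ)
      rw [map_add, add_re] at this
      linarith
  have hleft : (Λ φ).re ≤ C - (Λ ψ).re :=
    hφ Λ hΛ _ fun σ hσ => by linarith [hright σ hσ]
  rw [map_add, add_re]
  linarith

lemma mem_coeffHull_of_rescale
    (h : ∀ r ∈ Set.Ioo (0 : ℝ) 1, PowerSeries.rescale (r : ℂ) φ ∈ coeffHull S) :
    φ ∈ coeffHull S := by
  intro Λ hΛ C hC
  obtain ⟨s, c, hc⟩ := exists_eq_sum_coeff hΛ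
  have hcont : Continuous fun r : ℝ => Λ (PowerSeries.rescale (r : ℂ) φ) := by
    simp only [hc, PowerSeries.coeff_rescale]
    fun_prop
  have hlim := ((continuous_re.comp hcont).tendsto 1).mono_left
    (nhdsWithin_le_nhds (s := Set.Iio 1))
  have hle := le_of_tendsto hlim
    (Filter.mem_of_superset (Ioo_mem_nhdsLT one_pos) fun r hr => h r hr Λ hΛ C hC)
  simpa using hle

end CoeffHull

section CoeffDeriv

open scoped PowerSeries Pointwise
open PowerSeries (coeff)

/-- `F'` is the derivative at `s` of the family of power series `F`, coefficient by coefficient. -/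
def HasCoeffDerivAt (F : ℂ → ℂ⟦X⟧) (F' : ℂ⟦X⟧) (s : ℂ) : Prop :=
  ∀ k, HasDerivAt (fun t => coeff k (F t)) (coeff k F') s

variable {F G : ℂ → ℂ⟦X⟧} {F' G' : ℂ⟦X⟧} {s : ℂ}

namespace HasCoeffDerivAt

lemma apply (hF : HasCoeffDerivAt F F' s) {Λ : ℂ⟦X⟧ →ₗ[ℂ] ℂ} (hΛ : Λ ∈ coeffFunctionals) :
    HasDerivAt (fun t => Λ (F t)) (Λ F') s := by
  obtain ⟨u, c, hc⟩ := exists_eq_sum_coeff hΛ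
  simp only [hc]
  exact HasDerivAt.fun_sum fun k _ => (hF k).const_mul (c k)

lemma const (φ : ℂ⟦X⟧) (s : ℂ) : HasCoeffDerivAt (fun _ => φ) 0 s := fun k => by
  simpa using hasDerivAt_const s (coeff k φ)

lemma mul (hF : HasCoeffDerivAt F F' s) (hG : HasCoeffDerivAt G G' s) :
    HasCoeffDerivAt (fun t => F t * G t) (F' * G s + F s * G') s := fun k => by
  simp only [PowerSeries.coeff_mul, map_add, ← Finset.sum_add_distrib]
  exact HasDerivAt.fun_sum fun p _ => (hF p.1).mul (hG p.2)

lemma pow_succ (hF : HasCoeffDerivAt F F' s) (n : ℕ) :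
    HasCoeffDerivAt (fun t => F t ^ (n + 1)) ((n + 1) • (F s ^ n * F')) s := by
  induction n with
  | zero => simpa using hF
  | succ n ih =>
    have hstep : (n + 1 + 1) • (F s ^ (n + 1) * F') =
        (n + 1) • (F s ^ n * F') * F s + F s ^ (n + 1) * F' := by ring
    rw [hstep]
    exact ih.mul hF

end HasCoeffDerivAt

end CoeffDeriv

section GeomSeries

open scoped PowerSeries Pointwise
open PowerSeries (coeff)

/-- The geometric series `1 / (1 - v X)`. -/
noncomputable def geomSeries (v : ℂ) : ℂ⟦X⟧ := PowerSeries.mk (v ^ ·)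

@[simp]
lemma coeff_geomSeries (v : ℂ) (k : ℕ) : coeff k (geomSeries v) = v ^ k :=
  PowerSeries.coeff_mk _ _

lemma geomSeries_mul_one_sub (v : ℂ) :
    geomSeries v * (1 - PowerSeries.C v * PowerSeries.X) = 1 := by
  ext (_ | k)
  · simp [geomSeries]
  · simp [mul_sub, ← mul_assoc, mul_comm _ (PowerSeries.C v), PowerSeries.coeff_succ_mul_X,
      PowerSeries.coeff_one, pow_succ']

lemma coeff_geomSeries_pow (v : ℂ) (d k : ℕ) :
    coeff k (geomSeries v ^ (d + 1)) = (d + k).choose d * v ^ k := by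
  have hgeom : geomSeries v = PowerSeries.rescale v (PowerSeries.mk 1) := by
    ext k
    simp [PowerSeries.coeff_rescale]
  rw [hgeom, ← map_pow, PowerSeries.mk_one_pow_eq_mk_choose_add, PowerSeries.coeff_rescale,
    PowerSeries.coeff_mk, mul_comm]

lemma hasCoeffDerivAt_smul_geomSeries (a b s : ℂ) :
    HasCoeffDerivAt (fun t => PowerSeries.C t * geomSeries (b + t * (a - b)))
      (geomSeries (b + s * (a - b)) ^ 2 * (1 - PowerSeries.C b * PowerSeries.X)) s := by
  set v := b + s * (a - b) with hv
  have hsplit : geomSeries v ^ 2 * (1 - PowerSeries.C b * PowerSeries.X) =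
      geomSeries v + PowerSeries.C (s * (a - b)) * (geomSeries v ^ 2 * PowerSeries.X) := by
    have hb : PowerSeries.C b = PowerSeries.C v - PowerSeries.C (s * (a - b)) := by
      rw [← map_sub, hv, add_sub_cancel_right]
    rw [hb]
    linear_combination geomSeries v * geomSeries_mul_one_sub v
  rw [hsplit]
  have hline : HasDerivAt (fun t => b + t * (a - b)) (a - b) s := by
    simpa using ((hasDerivAt_id s).mul_const (a - b)).const_add b
  rintro (_ | k)
  · simpa [geomSeries] using hasDerivAt_id' s
  · simp only [map_add, PowerSeries.coeff_C_mul, coeff_geomSeries, ← mul_assoc,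
      PowerSeries.coeff_succ_mul_X, coeff_geomSeries_pow v 1]
    refine ((hasDerivAt_id' s).mul (hline.fun_pow (k + 1))).congr_deriv ?_
    rw [Nat.choose_one_right, add_tsub_cancel_right]
    push_cast
    ring

lemma hasCoeffDerivAt_smul_geomSeries_pow_mul (n : ℕ) (a b s : ℂ) :
    HasCoeffDerivAt
      (fun t => (PowerSeries.C t * geomSeries (b + t * (a - b))) ^ (n + 1) * geomSeries b)
      (PowerSeries.C ((n + 1) * s ^ n) * geomSeries (b + s * (a - b)) ^ (n + 2)) s := by
  convert ((hasCoeffDerivAt_smul_geomSeries a b s).pow_succ n).mul (.const (geomSeries b) s)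
    using 1
  simp only [nsmul_eq_mul, map_mul, map_pow, map_add, map_natCast, map_one, Nat.cast_add,
    Nat.cast_one, mul_zero, add_zero, mul_pow]
  linear_combination -((n + 1) * PowerSeries.C s ^ n * geomSeries (b + s * (a - b)) ^ (n + 2)) *
    geomSeries_mul_one_sub b

/-- Feynman's parametrisation: with `v = b + s (a - b)`, the product equals
`∫₀¹ (n + 1) s ^ n / (1 - v X) ^ (n + 2) ds`, a mean of the series on the right. -/
lemma geomSeries_pow_mul_geomSeries_mem_coeffHull (n : ℕ) (a b : ℂ) :
    geomSeries a ^ (n + 1) * geomSeries b ∈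
      coeffHull ((fun v => geomSeries v ^ (n + 2)) '' segment ℝ a b) := by
  intro Λ hΛ C hC
  set E : ℝ → ℂ⟦X⟧ := fun t =>
    (PowerSeries.C (t : ℂ) * geomSeries (b + t * (a - b))) ^ (n + 1) * geomSeries b with hE
  set e : ℝ → ℝ := fun s => (Λ (E s)).re - C * s ^ (n + 1) with he
  have hderiv (s : ℝ) : HasDerivAt e
      ((n + 1) * s ^ n * ((Λ (geomSeries (b + s * (a - b)) ^ (n + 2))).re - C)) s := by
    refine (((hasCoeffDerivAt_smul_geomSeries_pow_mul n a b s).apply hΛ).real_of_complex.sub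
      ((hasDerivAt_pow (n + 1) s).const_mul C)).congr_deriv ?_
    rw [← PowerSeries.smul_eq_C_mul, map_smul, smul_eq_mul]
    norm_cast
    rw [re_ofReal_mul]
    push_cast
    ring
  have hanti : AntitoneOn e (Set.Icc 0 1) := by
    refine antitoneOn_of_hasDerivWithinAt_nonpos (convex_Icc 0 1)
      (fun s _ => (hderiv s).continuousAt.continuousWithinAt)
      (fun s _ => (hderiv s).hasDerivWithinAt) fun s hs => ?_
    rw [interior_Icc] at hs
    have hmem : b + (s : ℂ) * (a - b) ∈ segment ℝ a b := by
      rw [segment_symm]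
      exact ⟨1 - s, s, by linarith [hs.2], hs.1.le, by ring, by
        simp only [real_smul, ofReal_sub, ofReal_one]
        ring⟩
    exact mul_nonpos_of_nonneg_of_nonpos (by have := hs.1; positivity)
      (sub_nonpos.2 (hC _ ⟨_, hmem, rfl⟩))
  simpa [he, hE] using
    hanti (Set.left_mem_Icc.2 zero_le_one) (Set.right_mem_Icc.2 zero_le_one) zero_le_one

lemma image_geomSeries_pow_subset_coeffHull {K : Set ℂ} (hK : Convex ℝ K) (n : ℕ) :
    (geomSeries '' K) ^ (n + 1) ⊆ coeffHull ((fun v => geomSeries v ^ (n + 1)) '' K) := by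
  induction n with
  | zero =>
    simp only [zero_add, pow_one]
    exact subset_coeffHull
  | succ n ih =>
    rw [pow_succ, Set.mul_subset_iff]
    intro φ hφ ψ hψ
    refine coeffHull_subset_coeffHull ?_ (mul_mem_coeffHull (ih hφ) (subset_coeffHull hψ))
    rintro _ ⟨_, ⟨a, ha, rfl⟩, _, ⟨b, hb, rfl⟩, rfl⟩
    exact coeffHull_mono (Set.image_mono (hK.segment_subset ha hb))
      (geomSeries_pow_mul_geomSeries_mem_coeffHull n a b)

lemma re_le_of_forall_sphere_re_le {F : ℂ → ℂ} {c z : ℂ} {r C : ℝ} (hr : r ≠ 0)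
    (hF : DiffContOnCl ℂ F (ball c r)) (h : ∀ w ∈ sphere c r, (F w).re ≤ C)
    (hz : z ∈ closedBall c r) : (F z).re ≤ C := by
  rw [← Real.exp_le_exp, ← norm_exp]
  refine norm_le_of_forall_mem_frontier_norm_le (f := fun w => exp (F w)) isBounded_ball
    (differentiable_exp.comp_diffContOnCl hF) (fun w hw => ?_) (by rwa [closure_ball c hr])
  rw [frontier_ball c hr] at hw
  rw [norm_exp]
  exact Real.exp_le_exp.2 (h w hw)

lemma geomSeries_pow_closedBall_subset_coeffHull (n : ℕ) :
    (fun v => geomSeries v ^ (n + 1)) '' closedBall 0 1 ⊆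
      coeffHull ((fun v => geomSeries v ^ (n + 1)) '' sphere 0 1) := by
  rintro _ ⟨v, hv, rfl⟩ Λ hΛ C hC
  obtain ⟨s, c, hc⟩ := exists_eq_sum_coeff hΛ
  have hdiff : Differentiable ℂ fun v => Λ (geomSeries v ^ (n + 1)) := by
    simp only [hc, coeff_geomSeries_pow]
    fun_prop
  exact re_le_of_forall_sphere_re_le one_ne_zero hdiff.diffContOnCl
    (fun z hz => hC _ ⟨z, hz, rfl⟩) hv

end GeomSeries

section TaylorSeries

open scoped PowerSeries
open PowerSeries (coeff)

/-- The Taylor series at `0` of `f`, as a formal power series. -/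
noncomputable def taylorSeries (f : ℂ → ℂ) : ℂ⟦X⟧ := PowerSeries.mk (taylorCoeff f)

variable {f g : ℂ → ℂ}

@[simp]
lemma coeff_taylorSeries (f : ℂ → ℂ) (k : ℕ) : coeff k (taylorSeries f) = taylorCoeff f k :=
  PowerSeries.coeff_mk _ _

lemma taylorSeries_congr (h : f =ᶠ[nhds 0] g) : taylorSeries f = taylorSeries g := by
  ext k
  simp only [coeff_taylorSeries, taylorCoeff, h.iteratedDeriv_eq k]

lemma taylorSeries_const (c : ℂ) : taylorSeries (fun _ => c) = PowerSeries.C c := by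
  ext (_ | k)
  · simp [taylorCoeff]
  · simp [taylorCoeff, iteratedDeriv_const]

lemma taylorSeries_sub (hf : AnalyticAt ℂ f 0) (hg : AnalyticAt ℂ g 0) :
    taylorSeries (fun z => f z - g z) = taylorSeries f - taylorSeries g := by
  ext k
  simp only [coeff_taylorSeries, map_sub, taylorCoeff,
    iteratedDeriv_fun_sub hf.contDiffAt hg.contDiffAt, sub_div]

lemma taylorSeries_mul (hf : AnalyticAt ℂ f 0) (hg : AnalyticAt ℂ g 0) :
    taylorSeries (fun z => f z * g z) = taylorSeries f * taylorSeries g := by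
  ext k
  simp only [coeff_taylorSeries, PowerSeries.coeff_mul, taylorCoeff,
    iteratedDeriv_fun_mul hf.contDiffAt hg.contDiffAt, Finset.sum_div,
    Finset.Nat.sum_antidiagonal_eq_sum_range_succ_mk]
  refine Finset.sum_congr rfl fun i hi => ?_
  have hfact : ((k.choose i : ℂ) * i.factorial) * (k - i).factorial = k.factorial :=
    mod_cast Nat.choose_mul_factorial_mul_factorial (Finset.mem_range_succ_iff.1 hi)
  rw [div_mul_div_comm, div_eq_div_iff (by simp [Nat.factorial_ne_zero])
    (by simp [Nat.factorial_ne_zero]), ← hfact]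
  ring

lemma taylorCoeff_deriv (f : ℂ → ℂ) (k : ℕ) :
    taylorCoeff (deriv f) k = (k + 1) * taylorCoeff f (k + 1) := by
  rw [taylorCoeff, taylorCoeff, iteratedDeriv_succ', Nat.factorial_succ]
  push_cast
  have := Nat.cast_add_one_ne_zero (R := ℂ) k
  field_simp

end TaylorSeries

section Herglotz

open scoped PowerSeries Pointwise ComplexConjugate
open PowerSeries (coeff)

variable {P : ℂ → ℂ} {r : ℝ}

lemma circleAverage_mul_div_pow (hr : 0 < r) (hP : DifferentiableOn ℂ P (closedBall 0 r))
    (k : ℕ) :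
    Real.circleAverage (fun z => P z * (r / z) ^ k) 0 r = r ^ k * taylorCoeff P k := by
  have hcauchy := hP.circleIntegral_one_div_sub_center_pow_smul hr k
  rw [Real.circleAverage_eq_circleIntegral hr.ne']
  have hint : (∮ z in C(0, r), (z - 0)⁻¹ • (P z * (r / z) ^ k)) =
      (r : ℂ) ^ k • ∮ z in C(0, r), (1 / (z - 0) ^ (k + 1)) • P z := by
    rw [← circleIntegral.integral_smul]
    congr 1
    ext z
    simp only [sub_zero, smul_eq_mul, div_pow, pow_succ]
    field_simp
  rw [hint, hcauchy, taylorCoeff]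
  simp only [smul_eq_mul]
  field_simp [two_pi_I_ne_zero]

lemma circleAverage_conj_mul_div_pow (hr : 0 < r) (hP : DifferentiableOn ℂ P (closedBall 0 r))
    (k : ℕ) :
    Real.circleAverage (fun z => conj (P z) * (r / z) ^ k) 0 r = conj (P 0) * 0 ^ k := by
  set Q : ℂ → ℂ := fun z => P z * (z / r) ^ k with hQ
  have hQd : DifferentiableOn ℂ Q (closedBall 0 r) :=
    hP.mul (((differentiable_id.div_const _).pow k).differentiableOn)
  have hmean : Real.circleAverage Q 0 r = Q 0 := by
    refine DiffContOnCl.circleAverage ?_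
    rw [abs_of_pos hr]
    exact (hQd.mono closure_ball_subset_closedBall).diffContOnCl
  have hconj : Set.EqOn (fun z => conj (P z) * (r / z) ^ k) ((conjCLE : ℂ →L[ℝ] ℂ) ∘ Q)
      (sphere 0 |r|) := by
    intro z hz
    rw [abs_of_pos hr, mem_sphere_zero_iff_norm] at hz
    have hu : conj (z / r) = r / z := by
      rw [← inv_eq_conj (by simp [hz, abs_of_pos hr, hr.ne']), inv_div]
    simp [hQ, ← hu]
  have hint : CircleIntegrable Q 0 r :=
    (hQd.continuousOn.mono sphere_subset_closedBall).circleIntegrable hr.le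
  rw [Real.circleAverage_congr_sphere hconj,
    (conjCLE : ℂ →L[ℝ] ℂ).circleAverage_comp_comm hint, hmean]
  simp [hQ]

lemma circleIntegrable_re_mul_apply_geomSeries (hr : 0 < r) (hP : ContinuousOn P (sphere 0 r))
    {Λ : ℂ⟦X⟧ →ₗ[ℂ] ℂ} (hΛ : Λ ∈ coeffFunctionals) :
    CircleIntegrable (fun z => ((2 * (P z).re : ℝ) : ℂ) * Λ (geomSeries (r / z))) 0 r := by
  obtain ⟨s, c, hc⟩ := exists_eq_sum_coeff hΛ
  have hdiv : ContinuousOn (fun z : ℂ => (r : ℂ) / z) (sphere 0 r) :=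
    continuousOn_const.div continuousOn_id fun _ hz => ne_of_mem_sphere hz hr.ne'
  simp only [hc, coeff_geomSeries]
  exact ContinuousOn.circleIntegrable hr.le (by fun_prop)

lemma circleAverage_re_mul_div_pow (hr : 0 < r) (hP : DifferentiableOn ℂ P (closedBall 0 r))
    (k : ℕ) :
    Real.circleAverage (fun z => ((2 * (P z).re : ℝ) : ℂ) * (r / z) ^ k) 0 r =
      coeff k (PowerSeries.rescale (r : ℂ) (taylorSeries P) + PowerSeries.C (conj (P 0))) := by
  have hPc : ContinuousOn P (sphere 0 r) := hP.continuousOn.mono sphere_subset_closedBall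
  have hdiv : ContinuousOn (fun z : ℂ => (r : ℂ) / z) (sphere 0 r) :=
    continuousOn_const.div continuousOn_id fun _ hz => ne_of_mem_sphere hz hr.ne'
  have hint : CircleIntegrable (fun z => P z * (r / z) ^ k) 0 r :=
    (hPc.fun_mul (hdiv.fun_pow k)).circleIntegrable hr.le
  have hint_conj : CircleIntegrable (fun z => conj (P z) * (r / z) ^ k) 0 r :=
    ((continuous_conj.comp_continuousOn' hPc).fun_mul (hdiv.fun_pow k)).circleIntegrable hr.le
  have hC : coeff k (PowerSeries.C (conj (P 0))) = conj (P 0) * 0 ^ k := by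
    cases k <;> simp [PowerSeries.coeff_C]
  rw [map_add, PowerSeries.coeff_rescale, coeff_taylorSeries, hC,
    ← circleAverage_mul_div_pow hr hP, ← circleAverage_conj_mul_div_pow hr hP,
    ← Real.circleAverage_fun_add hint hint_conj]
  simp only [← add_mul, add_conj]

lemma circleAverage_re_mul_apply_geomSeries (hr : 0 < r)
    (hP : DifferentiableOn ℂ P (closedBall 0 r)) {Λ : ℂ⟦X⟧ →ₗ[ℂ] ℂ} (hΛ : Λ ∈ coeffFunctionals) :
    Real.circleAverage (fun z => ((2 * (P z).re : ℝ) : ℂ) * Λ (geomSeries (r / z))) 0 r =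
      Λ (PowerSeries.rescale (r : ℂ) (taylorSeries P) + PowerSeries.C (conj (P 0))) := by
  have hPc : ContinuousOn P (sphere 0 r) := hP.continuousOn.mono sphere_subset_closedBall
  obtain ⟨s, c, hc⟩ := exists_eq_sum_coeff hΛ
  have hint (k : ℕ) : CircleIntegrable
      (fun z => c k • (((2 * (P z).re : ℝ) : ℂ) * (r / z) ^ k)) 0 r := by
    simpa [mul_left_comm] using circleIntegrable_re_mul_apply_geomSeries hr hPc
      (Submodule.smul_mem _ (c k) (coeff_mem_coeffFunctionals k))
  have hsum (z : ℂ) : ((2 * (P z).re : ℝ) : ℂ) * Λ (geomSeries (r / z)) =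
      ∑ k ∈ s, c k • (((2 * (P z).re : ℝ) : ℂ) * (r / z) ^ k) := by
    simp only [hc, coeff_geomSeries, Finset.mul_sum, smul_eq_mul]
    exact Finset.sum_congr rfl fun k _ => mul_left_comm _ _ _
  simp only [hsum, Real.circleAverage_fun_sum fun k _ => hint k, Real.circleAverage_fun_smul,
    circleAverage_re_mul_div_pow hr hP]
  simp only [hc, smul_eq_mul]

lemma re_apply_rescale_taylorSeries_add_nonpos (hr : 0 < r)
    (hP : DifferentiableOn ℂ P (closedBall 0 r)) (hpos : ∀ z ∈ sphere (0 : ℂ) r, 0 ≤ (P z).re)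
    {Λ : ℂ⟦X⟧ →ₗ[ℂ] ℂ} (hΛ : Λ ∈ coeffFunctionals)
    (hgeom : ∀ u ∈ sphere (0 : ℂ) 1, (Λ (geomSeries u)).re ≤ 0) :
    (Λ (PowerSeries.rescale (r : ℂ) (taylorSeries P) + PowerSeries.C (conj (P 0)))).re ≤ 0 := by
  have hint := circleIntegrable_re_mul_apply_geomSeries hr
    (hP.continuousOn.mono sphere_subset_closedBall) hΛ
  rw [← circleAverage_re_mul_apply_geomSeries hr hP hΛ, ← reCLM_apply,
    ← reCLM.circleAverage_comp_comm hint]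
  refine Real.circleAverage_mono_on_of_le_circle
    ⟨reCLM.integrable_comp hint.1, reCLM.integrable_comp hint.2⟩ fun z hz => ?_
  rw [abs_of_pos hr] at hz
  have hu : (r : ℂ) / z ∈ sphere (0 : ℂ) 1 := by
    simp [mem_sphere_zero_iff_norm.1 hz, abs_of_pos hr, hr.ne']
  rw [Function.comp_apply, reCLM_apply, re_ofReal_mul]
  exact mul_nonpos_of_nonneg_of_nonpos (mul_nonneg zero_le_two (hpos z hz)) (hgeom _ hu)

/-- The Herglotz representation, with the integral over `u` replaced by membership in a hull. -/
theorem taylorSeries_mem_coeffHull_of_re_pos (hP : DifferentiableOn ℂ P (ball 0 1))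
    (hpos : ∀ z ∈ ball (0 : ℂ) 1, 0 < (P z).re) :
    taylorSeries P ∈ coeffHull ((fun u => PowerSeries.C ((2 * (P 0).re : ℝ) : ℂ) * geomSeries u -
      PowerSeries.C (conj (P 0))) '' sphere 0 1) := by
  refine mem_coeffHull_of_rescale fun r ⟨hr, hr1⟩ Λ hΛ C hC => ?_
  have hP0 : 0 < 2 * (P 0).re := mul_pos two_pos (hpos 0 (mem_ball_self one_pos))
  set M := (C + (Λ (PowerSeries.C (conj (P 0)))).re) / (2 * (P 0).re) with hM
  have hgeom : ∀ u ∈ sphere (0 : ℂ) 1, (Λ (geomSeries u)).re ≤ M := by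
    intro u hu
    have hle : (Λ (PowerSeries.C ((2 * (P 0).re : ℝ) : ℂ) * geomSeries u -
      PowerSeries.C (conj (P 0)))).re ≤ C := hC _ ⟨u, hu, rfl⟩
    rw [← PowerSeries.smul_eq_C_mul, map_sub, map_smul, sub_re, smul_eq_mul, re_ofReal_mul] at hle
    rw [hM, le_div_iff₀' hP0]
    linarith
  -- As `coeff 0` is `1` on every geometric series, subtracting `M • coeff 0` makes the bound `0`.
  have hnonpos := re_apply_rescale_taylorSeries_add_nonpos hr
    (hP.mono (closedBall_subset_ball hr1))
    (fun z hz => (hpos z (sphere_subset_ball hr1 hz)).le)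
    (sub_mem hΛ (Submodule.smul_mem _ (M : ℂ) (coeff_mem_coeffFunctionals 0)))
    (fun u hu => by simpa using hgeom u hu)
  have hcoeff : coeff 0 (PowerSeries.rescale (r : ℂ) (taylorSeries P) +
      PowerSeries.C (conj (P 0))) = ((2 * (P 0).re : ℝ) : ℂ) := by
    rw [map_add, PowerSeries.coeff_rescale, coeff_taylorSeries, PowerSeries.coeff_zero_C]
    simp [taylorCoeff, add_conj]
  rw [LinearMap.sub_apply, LinearMap.smul_apply, hcoeff, map_add, sub_re, add_re, smul_eq_mul,
    ← ofReal_mul, ofReal_re, hM, div_mul_cancel₀ _ hP0.ne'] at hnonpos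
  linarith

lemma taylorSeries_mem_coeffHull_of_half_lt_re {h : ℂ → ℂ} (hh : DifferentiableOn ℂ h (ball 0 1))
    (h0 : h 0 = 1) (hre : ∀ z ∈ ball (0 : ℂ) 1, 2⁻¹ < (h z).re) :
    taylorSeries h ∈ coeffHull (geomSeries '' sphere 0 1) := by
  have han : AnalyticAt ℂ h 0 := hh.analyticAt (ball_mem_nhds 0 one_pos)
  have hhalf : taylorSeries h = taylorSeries (fun z => h z - 2⁻¹) + PowerSeries.C 2⁻¹ := by
    rw [taylorSeries_sub han analyticAt_const, taylorSeries_const, sub_add_cancel]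
  have hpos : ∀ z ∈ ball (0 : ℂ) 1, 0 < (h z - 2⁻¹).re := fun z hz => by
    simpa using hre z hz
  rw [hhalf]
  refine coeffHull_mono ?_ (add_mem_coeffHull
    (taylorSeries_mem_coeffHull_of_re_pos (hh.sub_const _) hpos)
    (subset_coeffHull (Set.mem_singleton _)))
  rintro _ ⟨_, ⟨u, hu, rfl⟩, _, rfl, rfl⟩
  refine ⟨u, hu, ?_⟩
  have hre0 : 2 * (h 0 - 2⁻¹).re = 1 := by norm_num [h0]
  have hconj : conj (h 0 - 2⁻¹) = 2⁻¹ := by norm_num [h0, map_ofNat]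
  simp only [hre0, hconj, ofReal_one, map_one, one_mul, sub_add_cancel]

lemma re_pos_of_re_pos_on_punctured_ball (hP : DifferentiableOn ℂ P (ball 0 1))
    (hpos : ∀ z ∈ ball (0 : ℂ) 1 \ {0}, 0 < (P z).re) : ∀ z ∈ ball (0 : ℂ) 1, 0 < (P z).re := by
  intro z hz
  rcases ne_or_eq z 0 with hz0 | rfl
  · exact hpos z ⟨hz, hz0⟩
  have hsub : closedBall (0 : ℂ) (1 / 2) ⊆ ball 0 1 := closedBall_subset_ball (by norm_num)
  obtain ⟨w, hw, hmin⟩ := (isCompact_sphere (0 : ℂ) (1 / 2)).exists_isMinOn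
    (NormedSpace.sphere_nonempty.2 (by norm_num)) (f := fun z => (P z).re)
    (continuous_re.comp_continuousOn (hP.continuousOn.mono (sphere_subset_closedBall.trans hsub)))
  have hle : (-P 0).re ≤ -(P w).re :=
    re_le_of_forall_sphere_re_le (F := fun z => -P z) (r := 1 / 2) (by norm_num)
      (hP.neg.mono (closure_ball_subset_closedBall.trans hsub)).diffContOnCl
      (fun z hz => neg_le_neg (hmin hz)) (mem_closedBall_self (by norm_num))
  have hw0 : 0 < (P w).re :=
    hpos w ⟨hsub (sphere_subset_closedBall hw), ne_of_mem_sphere hw (by norm_num)⟩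
  rw [neg_re] at hle
  linarith

lemma taylorSeries_mem_coeffHull_of_re_exp_mul_pos {p : ℂ → ℂ}
    (hp : DifferentiableOn ℂ p (ball 0 1)) (p0 : p 0 = 1) (θ : ℝ)
    (hpos : ∀ z ∈ ball (0 : ℂ) 1, 0 < (exp (θ * I) * p z).re) :
    taylorSeries p ∈ coeffHull ((fun x => 1 + PowerSeries.C x * PowerSeries.X) '' sphere 0 1 *
      geomSeries '' sphere 0 1) := by
  set e := exp (θ * I) with he
  have hee : conj e * e = 1 := by
    rw [← normSq_eq_conj_mul_self, normSq_eq_norm_sq, norm_exp_ofReal_mul_I]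
    norm_num
  have han : AnalyticAt ℂ p 0 := hp.analyticAt (ball_mem_nhds 0 one_pos)
  have hrotate : taylorSeries p = PowerSeries.C (conj e) * taylorSeries (fun z => e * p z) := by
    rw [taylorSeries_mul analyticAt_const han, taylorSeries_const, ← mul_assoc, ← map_mul, hee,
      map_one, one_mul]
  rw [hrotate]
  refine coeffHull_mono ?_ (mul_mem_coeffHull (subset_coeffHull (Set.mem_singleton _))
    (taylorSeries_mem_coeffHull_of_re_pos (hp.const_mul e) hpos))
  rintro _ ⟨_, rfl, _, ⟨u, hu, rfl⟩, rfl⟩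
  have hx : conj e ^ 2 * u ∈ sphere (0 : ℂ) 1 := by
    simp [he, norm_exp_ofReal_mul_I, mem_sphere_zero_iff_norm.1 hu]
  refine ⟨_, ⟨_, hx, rfl⟩, _, ⟨u, hu, rfl⟩, ?_⟩
  have hCee : PowerSeries.C (conj e) * PowerSeries.C e = 1 := by rw [← map_mul, hee, map_one]
  simp only [p0, mul_one, ← add_conj, map_add, map_mul, map_pow]
  linear_combination -PowerSeries.C (conj e) ^ 2 * geomSeries_mul_one_sub u
    - geomSeries u * hCee

end Herglotz

section MarxStrohhacker

open scoped ComplexConjugate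

lemma conj_mul_deriv_of_isMaxOn_re_nonpos {ψ : ℂ → ℂ} {ψ' : ℂ}
    (hψ : HasDerivAt ψ ψ' 0) (hmax : IsMaxOn (fun s => ‖ψ s‖) {s | s.re ≤ 0} 0) :
    ∃ m : ℝ, 0 ≤ m ∧ conj (ψ 0) * ψ' = m := by
  have hmaxSq : IsLocalMaxOn (fun s => ‖ψ s‖ ^ 2) {s : ℂ | s.re ≤ 0} 0 :=
    IsMaxOn.localize fun s hs => pow_le_pow_left₀ (norm_nonneg _) (hmax hs) 2
  have hderiv := (hψ.hasFDerivAt.restrictScalars ℝ).norm_sq.hasFDerivWithinAt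
    (s := {s : ℂ | s.re ≤ 0})
  have hdir (d : ℂ) (hd : d.re ≤ 0) : (conj (ψ 0) * ψ' * d).re ≤ 0 := by
    have hcone : d ∈ posTangentConeAt {s : ℂ | s.re ≤ 0} 0 :=
      mem_posTangentConeAt_of_segment_subset <| (convex_halfSpace_re_le 0).segment_subset
        (by simp) (by simpa using hd)
    have hle : 2 • inner ℝ (ψ 0) (d * ψ') ≤ 0 := hmaxSq.hasFDerivWithinAt_nonpos hderiv hcone
    rw [Complex.inner, nsmul_eq_mul, Nat.cast_ofNat] at hle
    rw [mul_right_comm, mul_assoc, mul_comm]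
    linarith
  have hneg := hdir (-1) (by simp)
  have hI := hdir I (by simp)
  have hnegI := hdir (-I) (by simp)
  simp only [mul_neg, mul_one, neg_re, mul_I_re, neg_neg, Left.neg_nonpos_iff] at hneg hI hnegI
  exact ⟨(conj (ψ 0) * ψ').re, hneg, Complex.ext rfl (by simpa using le_antisymm hnegI hI)⟩

lemma norm_mul_norm_le_of_forall_norm_le {ω : ℂ → ℂ} {z₀ : ℂ}
    (hω : DifferentiableOn ℂ ω (ball 0 ‖z₀‖)) (h0 : ω 0 = 0)
    (hmax : ∀ z ∈ closedBall (0 : ℂ) ‖z₀‖, ‖ω z‖ ≤ ‖ω z₀‖) {z : ℂ}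
    (hz : z ∈ closedBall (0 : ℂ) ‖z₀‖) : ‖ω z‖ * ‖z₀‖ ≤ ‖ω z₀‖ * ‖z‖ := by
  rcases (mem_closedBall_zero_iff.1 hz).lt_or_eq with hlt | heq
  · have hmaps : Set.MapsTo ω (ball 0 ‖z₀‖) (closedBall (ω 0) ‖ω z₀‖) := fun w hw => by
      simpa [h0] using hmax w (ball_subset_closedBall hw)
    have hschwarz := dist_le_div_mul_dist_of_mapsTo_ball hω hmaps (mem_ball_zero_iff.2 hlt)
    rw [h0, dist_zero_right, dist_zero_right, div_mul_eq_mul_div] at hschwarz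
    exact (le_div_iff₀ ((norm_nonneg z).trans_lt hlt)).1 hschwarz
  · rw [heq]
    gcongr
    exact hmax z hz

/-- Jack's lemma: on the half-plane `Re s ≤ 0` the modulus of `ω (z₀ * exp s) / exp s` is largest at
`s = 0`, by the Schwarz lemma. -/
lemma exists_mul_deriv_eq_mul_of_forall_norm_le {ω : ℂ → ℂ} {z₀ : ℂ}
    (hω : DifferentiableOn ℂ ω (ball 0 ‖z₀‖)) (hz₀ : DifferentiableAt ℂ ω z₀)
    (h0 : ω 0 = 0) (hne : ω z₀ ≠ 0)
    (hmax : ∀ z ∈ closedBall (0 : ℂ) ‖z₀‖, ‖ω z‖ ≤ ‖ω z₀‖) :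
    ∃ k : ℝ, 1 ≤ k ∧ z₀ * deriv ω z₀ = k * ω z₀ := by
  set ψ : ℂ → ℂ := fun s => ω (z₀ * exp s) * exp (-s) with hψ
  have hψ0 : ψ 0 = ω z₀ := by simp [hψ]
  have hz₀pos : 0 < ‖z₀‖ := norm_pos_iff.2 fun h => hne (h ▸ h0)
  have hderiv : HasDerivAt ψ (z₀ * deriv ω z₀ - ω z₀) 0 := by
    have hω₀ : HasDerivAt ω (deriv ω z₀) (z₀ * exp 0) := by simpa using hz₀.hasDerivAt
    refine ((hω₀.comp 0 ((hasDerivAt_exp 0).const_mul z₀)).fun_mul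
      (hasDerivAt_id' (0 : ℂ)).neg.cexp).congr_deriv ?_
    simp [mul_comm, sub_eq_add_neg]
  have hψmax : IsMaxOn (fun s => ‖ψ s‖) {s | s.re ≤ 0} 0 := fun s hs => by
    have hz : z₀ * exp s ∈ closedBall (0 : ℂ) ‖z₀‖ := by
      rw [mem_closedBall_zero_iff, norm_mul, norm_exp]
      exact mul_le_of_le_one_right hz₀pos.le (Real.exp_le_one_iff.2 hs)
    have hle := norm_mul_norm_le_of_forall_norm_le hω h0 hmax hz
    rw [norm_mul, mul_left_comm, mul_comm, mul_le_mul_iff_right₀ hz₀pos] at hle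
    change ‖ψ s‖ ≤ ‖ψ 0‖
    rwa [hψ0, hψ, norm_mul, exp_neg, norm_inv, ← div_eq_mul_inv,
      div_le_iff₀ (norm_pos_iff.2 (exp_ne_zero s))]
  obtain ⟨m, hm, hmeq⟩ := conj_mul_deriv_of_isMaxOn_re_nonpos hderiv hψmax
  refine ⟨1 + m / ‖ω z₀‖ ^ 2, le_add_of_nonneg_right (by positivity), ?_⟩
  have hnorm : (‖ω z₀‖ : ℂ) ^ 2 = conj (ω z₀) * ω z₀ := (conj_mul' _).symm
  have hconj : conj (ω z₀) ≠ 0 := (map_ne_zero _).2 hne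
  rw [hψ0] at hmeq
  push_cast
  rw [hnorm, ← hmeq]
  field_simp
  ring

lemma norm_lt_one_of_forall_mul_deriv_ne {ω : ℂ → ℂ} (hω : DifferentiableOn ℂ ω (ball 0 1))
    (h0 : ω 0 = 0) (hne : ∀ z ∈ ball (0 : ℂ) 1, 1 ≤ ‖ω z‖ → ∀ k : ℝ, 1 ≤ k →
      z * deriv ω z ≠ k * ω z) {z : ℂ} (hz : z ∈ ball (0 : ℂ) 1) : ‖ω z‖ < 1 := by
  by_contra! hz1
  have hsub : closedBall (0 : ℂ) ‖z‖ ⊆ ball 0 1 :=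
    closedBall_subset_ball (mem_ball_zero_iff.1 hz)
  obtain ⟨z₀, hz₀, hmax⟩ := (isCompact_closedBall (0 : ℂ) ‖z‖).exists_isMaxOn
    ⟨z, by simp⟩ (hω.continuousOn.norm.mono hsub)
  have hω₀ : 1 ≤ ‖ω z₀‖ := hz1.trans (hmax (by simp))
  have hball : closedBall (0 : ℂ) ‖z₀‖ ⊆ closedBall 0 ‖z‖ :=
    closedBall_subset_closedBall (mem_closedBall_zero_iff.1 hz₀)
  obtain ⟨k, hk, hkω⟩ := exists_mul_deriv_eq_mul_of_forall_norm_le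
    (hω.mono (ball_subset_closedBall.trans (hball.trans hsub)))
    (hω.differentiableAt (isOpen_ball.mem_nhds (hsub hz₀))) h0
    (norm_pos_iff.1 (one_pos.trans_le hω₀)) fun w hw => hmax (hball hw)
  exact hne z₀ (hsub hz₀) hω₀ k hk hkω

lemma re_one_add_two_mul_div_nonpos {w : ℂ} {k : ℝ} (hw : 1 ≤ ‖w‖) (hw1 : w ≠ 1) (hk : 1 ≤ k) :
    (1 + 2 * (k * w) / (1 - w)).re ≤ 0 := by
  have hw1' : 1 - w ≠ 0 := sub_ne_zero.2 hw1.symm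
  have hcayley : ((1 + w) / (1 - w)).re = (1 - ‖w‖ ^ 2) / ‖1 - w‖ ^ 2 := by
    rw [← normSq_eq_norm_sq, ← normSq_eq_norm_sq, div_re, normSq_apply w]
    simp only [add_re, one_re, sub_re, add_im, one_im, zero_add, sub_im, zero_sub, mul_neg]
    ring
  have hsplit : 1 + 2 * (k * w) / (1 - w) =
      ((1 - k : ℝ) : ℂ) + (k : ℂ) * ((1 + w) / (1 - w)) := by
    push_cast
    field_simp
    ring
  rw [hsplit, add_re, ofReal_re, re_ofReal_mul, hcayley]
  have : (1 - ‖w‖ ^ 2) / ‖1 - w‖ ^ 2 ≤ 0 :=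
    div_nonpos_of_nonpos_of_nonneg (by nlinarith) (sq_nonneg _)
  nlinarith

lemma exists_pow_eq_of_ne_zero {G : ℂ → ℂ} {c w : ℂ} {r : ℝ} {n : ℕ} (hr : 0 < r) (hn : n ≠ 0)
    (hG : DifferentiableOn ℂ G (ball c r)) (hne : ∀ z ∈ ball c r, G z ≠ 0) (hw : w ^ n = G c) :
    ∃ h : ℂ → ℂ, DifferentiableOn ℂ h (ball c r) ∧ h c = w ∧
      Set.EqOn G (fun z => h z ^ n) (ball c r) := by
  have hn' : (n : ℂ) ≠ 0 := Nat.cast_ne_zero.2 hn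
  have hc := mem_ball_self (x := c) hr
  have hw0 : w ≠ 0 := fun h => hne c hc (by rw [← hw, h, zero_pow hn])
  obtain ⟨L, hLc, hL⟩ := ((hG.deriv isOpen_ball).fun_div (hG.const_mul (n : ℂ))
    fun z hz => mul_ne_zero hn' (hne z hz)).isExactOn_ball.with_val_at c 0
  set h : ℂ → ℂ := fun z => w * exp (L z) with hdef
  have hh (z : ℂ) (hz : z ∈ ball c r) : HasDerivAt h (h z * (deriv G z / (n * G z))) z :=
    ((hL z hz).cexp.const_mul w).congr_deriv (mul_assoc _ _ _).symm
  have hhne (z : ℂ) : h z ≠ 0 := mul_ne_zero hw0 (exp_ne_zero _)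
  have hhd : DifferentiableOn ℂ h (ball c r) := fun z hz =>
    (hh z hz).differentiableAt.differentiableWithinAt
  have hhc : h c = w := by simp [hdef, hLc]
  have hlog : Set.EqOn (logDeriv G) (logDeriv fun z => h z ^ n) (ball c r) := by
    intro z hz
    rw [logDeriv_fun_pow (hh z hz).differentiableAt, logDeriv_apply, logDeriv_apply,
      (hh z hz).deriv, mul_div_cancel_left₀ _ (hhne z)]
    field_simp
  obtain ⟨a, -, ha⟩ := (logDeriv_eqOn_iff hG (hhd.fun_pow n) isOpen_ball
    (convex_ball c r).isPreconnected (fun z _ => pow_ne_zero n (hhne z)) hne).1 hlog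
  have hGa : G c = a * G c := by simpa [hhc, hw] using ha hc
  have ha1 : a = 1 := by simpa [hne c hc] using hGa
  exact ⟨h, hhd, hhc, by simpa [ha1] using ha⟩

lemma IsStarlikeFn.exists_eq_mul_sq {g : ℂ → ℂ} (hg : IsStarlikeFn g) :
    ∃ h : ℂ → ℂ, DifferentiableOn ℂ h (ball 0 1) ∧ h 0 = 1 ∧
      ∀ z ∈ ball (0 : ℂ) 1, h z ≠ 0 ∧ g z = z * h z ^ 2 := by
  obtain ⟨hd, hg0, hg1, hpos⟩ := hg
  have hfactor (z : ℂ) : g z = z * dslope g 0 z := by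
    simpa [hg0] using (sub_smul_dslope g 0 z).symm
  have hG0 : dslope g 0 0 = 1 := by rw [dslope_same, hg1]
  have hne (z : ℂ) (hz : z ∈ ball (0 : ℂ) 1) : dslope g 0 z ≠ 0 := by
    rcases eq_or_ne z 0 with rfl | hz0
    · rw [hG0]
      exact one_ne_zero
    · intro h
      simpa [hfactor z, h] using hpos z ⟨hz, hz0⟩
  obtain ⟨h, hh, h0, hsq⟩ := exists_pow_eq_of_ne_zero one_pos two_ne_zero
    ((differentiableOn_dslope (ball_mem_nhds 0 one_pos)).2 hd) hne (by rw [hG0, one_pow])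
  refine ⟨h, hh, h0, fun z hz => ⟨fun hz0 => hne z hz ?_, ?_⟩⟩
  · simp [hsq hz, hz0]
  · rw [hfactor, hsq hz]

lemma half_lt_re_of_norm_one_sub_inv_lt_one {w : ℂ} (hw : w ≠ 0) (h : ‖1 - w⁻¹‖ < 1) :
    2⁻¹ < w.re := by
  have hlt : ‖w - 1‖ < ‖w‖ := by
    have hmul : w - 1 = (1 - w⁻¹) * w := by field_simp
    rw [hmul, norm_mul]
    exact mul_lt_of_lt_one_left (norm_pos_iff.2 hw) h
  rw [← sq_lt_sq₀ (norm_nonneg _) (norm_nonneg _), ← normSq_eq_norm_sq, ← normSq_eq_norm_sq,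
    normSq_sub] at hlt
  simp only [map_one, mul_one] at hlt
  linarith

lemma mul_deriv_mul_sq_div {h : ℂ → ℂ} {z : ℂ} (hh : DifferentiableAt ℂ h z) (hz : z ≠ 0)
    (hne : h z ≠ 0) :
    z * deriv (fun z => z * h z ^ 2) z / (z * h z ^ 2) = 1 + 2 * (z * deriv h z) / h z := by
  rw [((hasDerivAt_id' z).fun_mul (hh.hasDerivAt.fun_pow 2)).deriv]
  field_simp
  ring

/-- The theorem of Marx and Strohhäcker: `Re √(g(z)/z) > 1/2` for `g` starlike. -/
theorem IsStarlikeFn.exists_eq_mul_sq_half_lt_re {g : ℂ → ℂ} (hg : IsStarlikeFn g) :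
    ∃ h : ℂ → ℂ, DifferentiableOn ℂ h (ball 0 1) ∧ h 0 = 1 ∧
      ∀ z ∈ ball (0 : ℂ) 1, 2⁻¹ < (h z).re ∧ g z = z * h z ^ 2 := by
  obtain ⟨h, hh, h0, hfactor⟩ := hg.exists_eq_mul_sq
  refine ⟨h, hh, h0, fun z hz => ⟨?_, (hfactor z hz).2⟩⟩
  have hω : DifferentiableOn ℂ (fun z => 1 - (h z)⁻¹) (ball 0 1) :=
    (hh.inv fun z hz => (hfactor z hz).1).const_sub 1
  have hlt : ‖1 - (h z)⁻¹‖ < 1 := by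
    refine norm_lt_one_of_forall_mul_deriv_ne hω (by simp [h0]) (fun w hw hω1 k hk hjack => ?_) hz
    have hne := (hfactor w hw).1
    have hhw := hh.differentiableAt (isOpen_ball.mem_nhds hw)
    have hw0 : w ≠ 0 := by
      rintro rfl
      norm_num [h0] at hω1
    have hg_eq : g =ᶠ[nhds w] fun z => z * h z ^ 2 :=
      Filter.eventuallyEq_of_mem (isOpen_ball.mem_nhds hw) fun z hz => (hfactor z hz).2
    have hpos := hg.2.2.2 w ⟨hw, hw0⟩
    rw [hg_eq.deriv_eq, (hfactor w hw).2, mul_deriv_mul_sq_div hhw hw0 hne] at hpos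
    have hω' : deriv (fun z => 1 - (h z)⁻¹) w = deriv h w / h w ^ 2 := by
      rw [(hhw.hasDerivAt.fun_inv hne).const_sub 1 |>.deriv]
      ring
    have hlog : w * deriv h w / h w = k * (1 - (h w)⁻¹) / (1 - (1 - (h w)⁻¹)) := by
      rw [← hjack, hω']
      field_simp
      ring
    have hnonpos := re_one_add_two_mul_div_nonpos hω1
      (by simpa [sub_eq_iff_eq_add] using hne) hk
    rw [mul_div_assoc, hlog, ← mul_div_assoc] at hpos
    exact hnonpos.not_gt hpos
  exact half_lt_re_of_norm_one_sub_inv_lt_one (hfactor z hz).1 hlt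

end MarxStrohhacker

section CloseToConvex

open scoped Pointwise

lemma geomSeries_sphere_pow_subset_coeffHull (n : ℕ) :
    (geomSeries '' sphere 0 1) ^ (n + 1) ⊆
      coeffHull ((fun v => geomSeries v ^ (n + 1)) '' sphere 0 1) :=
  (Set.pow_subset_pow_left (Set.image_mono sphere_subset_closedBall)).trans <|
    (image_geomSeries_pow_subset_coeffHull (convex_closedBall 0 1) n).trans <|
      coeffHull_subset_coeffHull (geomSeries_pow_closedBall_subset_coeffHull n)

lemma IsCloseToConvex.exists_deriv_eq_mul_sq {f : ℂ → ℂ} (hf : IsCloseToConvex f) :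
    ∃ (θ : ℝ) (p h : ℂ → ℂ), DifferentiableOn ℂ p (ball 0 1) ∧ p 0 = 1 ∧
      (∀ z ∈ ball (0 : ℂ) 1, 0 < (exp (θ * I) * p z).re) ∧
      DifferentiableOn ℂ h (ball 0 1) ∧ h 0 = 1 ∧ (∀ z ∈ ball (0 : ℂ) 1, 2⁻¹ < (h z).re) ∧
      Set.EqOn (deriv f) (fun z => p z * (h z * h z)) (ball 0 1) := by
  obtain ⟨hfd, -, hf1, θ, g, hg, hpos⟩ := hf
  obtain ⟨h, hh, h0, hhg⟩ := hg.exists_eq_mul_sq_half_lt_re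
  have hne (z : ℂ) (hz : z ∈ ball (0 : ℂ) 1) : h z ≠ 0 := by
    intro hz0
    have := (hhg z hz).1
    norm_num [hz0] at this
  have hp : DifferentiableOn ℂ (fun z => deriv f z / h z ^ 2) (ball 0 1) :=
    (hfd.deriv isOpen_ball).fun_div (hh.fun_pow 2) fun z hz => pow_ne_zero 2 (hne z hz)
  refine ⟨θ, fun z => deriv f z / h z ^ 2, h, hp, by simp [hf1, h0],
    re_pos_of_re_pos_on_punctured_ball (hp.const_mul _) fun z hz => ?_, hh, h0,
    fun z hz => (hhg z hz).1, fun z hz => ?_⟩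
  · have hz0 : z ≠ 0 := hz.2
    convert hpos z hz using 2
    rw [(hhg z hz.1).2]
    field_simp
  · have := hne z hz
    field_simp

theorem IsCloseToConvex.taylorSeries_deriv_mem_coeffHull {f : ℂ → ℂ} (hf : IsCloseToConvex f) :
    taylorSeries (deriv f) ∈ coeffHull
      ((fun x => 1 + PowerSeries.C x * PowerSeries.X) '' sphere 0 1 *
        (fun v => geomSeries v ^ 3) '' sphere 0 1) := by
  obtain ⟨θ, p, h, hp, p0, hpos, hh, h0, hre, hfactor⟩ := hf.exists_deriv_eq_mul_sq
  have hball : ball (0 : ℂ) 1 ∈ nhds 0 := ball_mem_nhds 0 one_pos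
  have hpa := hp.analyticAt hball
  have hha := hh.analyticAt hball
  have hphull := taylorSeries_mem_coeffHull_of_re_exp_mul_pos hp p0 θ hpos
  have hhhull := taylorSeries_mem_coeffHull_of_half_lt_re hh h0 hre
  rw [taylorSeries_congr (Filter.eventuallyEq_of_mem hball hfactor),
    taylorSeries_mul hpa (hha.fun_mul hha), taylorSeries_mul hha hha]
  refine coeffHull_subset_coeffHull ?_ (mul_mem_coeffHull hphull (mul_mem_coeffHull hhhull hhhull))
  rw [mul_assoc, ← pow_two, ← pow_succ', Set.mul_subset_iff]
  exact fun φ hφ ψ hψ => mul_mem_coeffHull (subset_coeffHull hφ)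
    (geomSeries_sphere_pow_subset_coeffHull 2 hψ)

end CloseToConvex

section Zalcman

open scoped ComplexConjugate
open PowerSeries (coeff)

lemma norm_sq_sub_le_of_forall_re_le {A B : ℂ} {M : ℝ}
    (h : ∀ η : ℂ, ‖η‖ = 1 → ∀ t : ℝ, 2 * t * (η * A).re - (η ^ 2 * B).re ≤ t ^ 2 + M) :
    ‖A ^ 2 - B‖ ≤ M := by
  obtain ⟨c, hc, hcAB⟩ := RCLike.exists_norm_eq_mul_self (A ^ 2 - B)
  obtain ⟨η, hη⟩ := IsAlgClosed.exists_pow_nat_eq c two_pos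
  have hη1 : ‖η‖ = 1 := by
    rw [← pow_left_inj₀ (norm_nonneg η) zero_le_one two_ne_zero, ← norm_pow, hη, hc, one_pow]
  have hnorm : ‖A ^ 2 - B‖ = ((η * A) ^ 2 - η ^ 2 * B).re := by
    rw [← ofReal_re ‖A ^ 2 - B‖, mul_pow, ← mul_sub, hη]
    exact congrArg re hcAB
  have hre_sq : ((η * A) ^ 2).re ≤ (η * A).re ^ 2 := by
    rw [pow_two, mul_re]
    nlinarith [sq_nonneg (η * A).im]
  rw [hnorm, sub_re]
  linarith [h η hη1 (η * A).re]

lemma re_sq_sub_re_eq {a b : ℂ} (ha : ‖a‖ = 1) (hb : ‖b‖ = 1) :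
    (2 * a - b).re ^ 2 - (3 * a ^ 2 - 2 * a * b).re =
      5 / 2 + ((b ^ 2 / 2 - a ^ 2).re - 2 * (a * conj b).re) := by
  have ha2 := normSq_eq_norm_sq a
  have hb2 := normSq_eq_norm_sq b
  rw [normSq_apply, ha] at ha2
  rw [normSq_apply, hb] at hb2
  simp only [pow_two, sub_re, mul_re, div_ofNat_re, conj_re, conj_im, re_ofNat, im_ofNat, zero_mul,
    sub_zero, mul_im, add_zero]
  linear_combination 2 * ha2 + hb2 / 2

lemma re_sq_add_re_sq_le {a b : ℂ} (ha : ‖a‖ = 1) (hb : ‖b‖ = 1) :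
    (b ^ 2 / 2 - a ^ 2).re ^ 2 + 2 * (a * conj b).re ^ 2 ≤ 9 / 4 := by
  have hre : (b ^ 2 / 2 - a ^ 2).re ^ 2 ≤ normSq (b ^ 2 / 2 - a ^ 2) := by
    rw [normSq_apply, ← pow_two]
    exact le_add_of_nonneg_right (mul_self_nonneg _)
  have hu : normSq (a * conj b) = 1 := by simp [normSq_eq_norm_sq, ha, hb]
  have hcross : 2 * (b ^ 2 / 2 * conj (a ^ 2)).re = 2 * (a * conj b).re ^ 2 - 1 := by
    have hconj : b ^ 2 / 2 * conj (a ^ 2) = ((2⁻¹ : ℝ) : ℂ) * conj ((a * conj b) ^ 2) := by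
      simp only [map_pow, map_mul, conj_conj]
      push_cast
      ring
    rw [hconj, re_ofReal_mul, conj_re, pow_two, mul_re, ← hu, normSq_apply]
    ring
  have hb2 : normSq (b ^ 2 / 2) = 1 / 4 := by norm_num [normSq_eq_norm_sq, hb]
  have ha2 : normSq (a ^ 2) = 1 := by simp [normSq_eq_norm_sq, ha]
  rw [normSq_sub, hcross, ha2, hb2] at hre
  linarith

lemma re_sq_sub_re_le {a b : ℂ} (ha : ‖a‖ = 1) (hb : ‖b‖ = 1) :
    (2 * a - b).re ^ 2 - (3 * a ^ 2 - 2 * a * b).re ≤ (5 + 3 * Real.sqrt 3) / 2 := by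
  rw [re_sq_sub_re_eq ha hb]
  have hquad := re_sq_add_re_sq_le ha hb
  set N := (b ^ 2 / 2 - a ^ 2).re
  set T := (a * conj b).re
  have hlin : N - 2 * T ≤ 3 / 2 * Real.sqrt 3 := by
    refine le_of_sq_le_sq ?_ (by positivity)
    rw [mul_pow, Real.sq_sqrt zero_le_three]
    nlinarith [sq_nonneg (T + N)]
  linarith

lemma coeff_succ_one_add_mul_geomSeries_cube (x v : ℂ) (k : ℕ) :
    coeff (k + 1) ((1 + PowerSeries.C x * PowerSeries.X) * geomSeries v ^ 3) =
      (k + 3).choose 2 * v ^ (k + 1) + x * ((k + 2).choose 2 * v ^ k) := by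
  rw [add_mul, one_mul, mul_right_comm, map_add, PowerSeries.coeff_succ_mul_X,
    PowerSeries.coeff_C_mul, coeff_geomSeries_pow v 2, coeff_geomSeries_pow v 2, add_comm 2 k,
    add_comm 2 (k + 1)]

theorem IsCloseToConvex.two_mul_re_sub_re_le {f : ℂ → ℂ} (hf : IsCloseToConvex f) {η : ℂ}
    (hη : ‖η‖ = 1) (t : ℝ) :
    2 * t * (η * taylorCoeff f 3).re - (η ^ 2 * taylorCoeff f 5).re ≤
      t ^ 2 + (5 + 3 * Real.sqrt 3) / 2 := by
  set Λ := ((2 * t : ℝ) * η / 3) • coeff (R := ℂ) 2 - (η ^ 2 / 5) • coeff 4 with hΛdef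
  have hΛ : Λ ∈ coeffFunctionals :=
    sub_mem (Submodule.smul_mem _ _ (coeff_mem_coeffFunctionals 2))
      (Submodule.smul_mem _ _ (coeff_mem_coeffFunctionals 4))
  have hΛf : Λ (taylorSeries (deriv f)) =
      (2 * t : ℝ) * (η * taylorCoeff f 3) - η ^ 2 * taylorCoeff f 5 := by
    simp only [hΛdef, LinearMap.sub_apply, LinearMap.smul_apply, coeff_taylorSeries,
      taylorCoeff_deriv, Nat.cast_ofNat, Nat.reduceAdd, smul_eq_mul]
    ring
  have hle := hf.taylorSeries_deriv_mem_coeffHull Λ hΛ (t ^ 2 + (5 + 3 * Real.sqrt 3) / 2) ?_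
  · rwa [hΛf, sub_re, re_ofReal_mul] at hle
  rintro _ ⟨_, ⟨x, hx, rfl⟩, _, ⟨v, hv, rfl⟩, rfl⟩
  rw [mem_sphere_zero_iff_norm] at hx hv
  have hΛxv : Λ ((1 + PowerSeries.C x * PowerSeries.X) * geomSeries v ^ 3) =
      (2 * t : ℝ) * (2 * (η * v ^ 2) - -(η * x * v)) -
        (3 * (η * v ^ 2) ^ 2 - 2 * (η * v ^ 2) * -(η * x * v)) := by
    simp only [hΛdef, LinearMap.sub_apply, LinearMap.smul_apply,
      coeff_succ_one_add_mul_geomSeries_cube, Nat.choose, add_zero, Nat.reduceAdd, Nat.cast_ofNat,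
      pow_one, smul_eq_mul]
    ring
  have htorus := re_sq_sub_re_le (a := η * v ^ 2) (b := -(η * x * v)) (by simp [hη, hv])
    (by simp [hη, hx, hv])
  rw [hΛxv, sub_re, re_ofReal_mul]
  linarith [sq_nonneg (t - (2 * (η * v ^ 2) - -(η * x * v)).re)]

end Zalcman

theorem zalcman_closeToConvex_n3
    (f : ℂ → ℂ) (hf : IsCloseToConvex f) :
    ‖(taylorCoeff f 3) ^ 2 - taylorCoeff f 5‖ ≤ (5 + 3 * Real.sqrt 3) / 2 :=
  norm_sq_sub_le_of_forall_re_le fun _ hη => hf.two_mul_re_sub_re_le hη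
end

section
/- Let n ≥ 2 be an integer, λ > 0 a real number, and s, t real numbers. Define the complex numbers a_n = ((n+1)/2)·e^{i(n−1)t} − ((n−1)/2)·e^{i(s+(n−2)t)} and a_{2n−1} = n·e^{2i(n−1)t} − (n−1)·e^{i(s+(2n−3)t)}. Then 4[λ(Re a_n)² − Re a_{2n−1}] − 4n ≤ F_{n,λ}(cos((n−1)t), cos(s+(n−2)t)). -/
/-- The function `F_{n,λ}(u,v)` from Lemma 4 of Li–Ponnusamy. -/
noncomputable def Ff (n : ℕ) (lam u v : ℝ) : ℝ :=
  (((n : ℝ) + 1) ^ 2 * lam - 8 * n) * u ^ 2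
    - 2 * ((n : ℝ) - 1) * (((n : ℝ) + 1) * lam - 2) * u * v
    + 4 * ((n : ℝ) - 1) * Real.sqrt (1 - u ^ 2) * Real.sqrt (1 - v ^ 2)
    + ((n : ℝ) - 1) ^ 2 * lam * v ^ 2

/-!
Write `α = (n - 1) t` and `β = s + (n - 2) t`. Since `2 (n - 1) t = 2α` and
`s + (2n - 3) t = α + β`, the double-angle and addition formulas turn the functional into a
polynomial in `cos α`, `cos β` plus the single term `-4 (n - 1) sin α sin β`. As
`|sin θ| = √(1 - cos² θ)`, this term is at most `4 (n - 1) √(1 - cos² α) √(1 - cos² β)`.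
-/

/-- The function `F_{n,λ}(u, v)` with the index `n` replaced by a real parameter `x`. -/
noncomputable def zalcmanMajorant (x lam u v : ℝ) : ℝ :=
  ((x + 1) ^ 2 * lam - 8 * x) * u ^ 2
    - 2 * (x - 1) * ((x + 1) * lam - 2) * u * v
    + 4 * (x - 1) * √(1 - u ^ 2) * √(1 - v ^ 2)
    + (x - 1) ^ 2 * lam * v ^ 2

/-- For an integer `x ≥ 1`, the coefficient of `z ^ x` in the extreme point
`(z - (ξ + η) / 2 * z ^ 2) / (1 - η * z) ^ 2` of the closed convex hull of the close-to-convex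
functions, where `ξ = exp (i s)` and `η = exp (i t)` with `ξ ≠ η`. Both `a_n` and `a_{2n-1}` are
values of it, at `x = n` and `x = 2n - 1`; the index `x` is allowed to be real. -/
noncomputable def extremePointCoeff (x s t : ℝ) : ℂ :=
  ((x : ℂ) + 1) / 2 * Complex.exp (Complex.I * (((x - 1) * t : ℝ) : ℂ))
    - ((x : ℂ) - 1) / 2 * Complex.exp (Complex.I * ((s + (x - 2) * t : ℝ) : ℂ))

theorem extremePointCoeff_two_mul_sub_one (x s t : ℝ) :
    extremePointCoeff (2 * x - 1) s t =
      (x : ℂ) * Complex.exp (2 * Complex.I * (((x - 1) * t : ℝ) : ℂ))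
        - ((x : ℂ) - 1) * Complex.exp (Complex.I * ((s + (2 * x - 3) * t : ℝ) : ℂ)) := by
  unfold extremePointCoeff
  push_cast
  ring_nf

theorem re_ofReal_mul_exp_I_mul_ofReal (c θ : ℝ) :
    ((c : ℂ) * Complex.exp (Complex.I * (θ : ℂ))).re = c * Real.cos θ := by
  rw [Complex.re_ofReal_mul, mul_comm Complex.I, Complex.exp_ofReal_mul_I_re]

theorem extremePointCoeff_re (x s t : ℝ) :
    (extremePointCoeff x s t).re =
      (x + 1) / 2 * Real.cos ((x - 1) * t) - (x - 1) / 2 * Real.cos (s + (x - 2) * t) := by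
  rw [← re_ofReal_mul_exp_I_mul_ofReal, ← re_ofReal_mul_exp_I_mul_ofReal, ← Complex.sub_re]
  push_cast [extremePointCoeff]
  rfl

theorem extremePointCoeff_two_mul_sub_one_re (x s t : ℝ) :
    (extremePointCoeff (2 * x - 1) s t).re =
      x * Real.cos (2 * ((x - 1) * t))
        - (x - 1) * Real.cos ((x - 1) * t + (s + (x - 2) * t)) := by
  rw [extremePointCoeff_re]
  ring_nf

theorem zalcman_functional_extremePointCoeff_eq (x lam s t : ℝ) :
    4 * (lam * (extremePointCoeff x s t).re ^ 2 - (extremePointCoeff (2 * x - 1) s t).re) - 4 * x =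
      lam * ((x + 1) * Real.cos ((x - 1) * t) - (x - 1) * Real.cos (s + (x - 2) * t)) ^ 2
        - 8 * x * Real.cos ((x - 1) * t) ^ 2
        + 4 * (x - 1) * (Real.cos ((x - 1) * t) * Real.cos (s + (x - 2) * t))
        + 4 * (x - 1) * -(Real.sin ((x - 1) * t) * Real.sin (s + (x - 2) * t)) := by
  rw [extremePointCoeff_re, extremePointCoeff_two_mul_sub_one_re, Real.cos_two_mul,
    Real.cos_add ((x - 1) * t)]
  ring

theorem neg_sin_mul_sin_le_sqrt_mul_sqrt (α β : ℝ) :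
    -(Real.sin α * Real.sin β) ≤ √(1 - Real.cos α ^ 2) * √(1 - Real.cos β ^ 2) := by
  rw [← Real.abs_sin_eq_sqrt_one_sub_cos_sq, ← Real.abs_sin_eq_sqrt_one_sub_cos_sq, ← abs_mul]
  exact neg_le_abs _

theorem zalcman_functional_extreme_point_bound_general {x : ℝ} (hx : 1 ≤ x) (lam s t : ℝ) :
    4 * (lam * (extremePointCoeff x s t).re ^ 2 - (extremePointCoeff (2 * x - 1) s t).re) - 4 * x ≤
      zalcmanMajorant x lam (Real.cos ((x - 1) * t)) (Real.cos (s + (x - 2) * t)) := by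
  rw [zalcman_functional_extremePointCoeff_eq]
  set α := (x - 1) * t
  set β := s + (x - 2) * t
  calc
    _ ≤ lam * ((x + 1) * Real.cos α - (x - 1) * Real.cos β) ^ 2 - 8 * x * Real.cos α ^ 2
          + 4 * (x - 1) * (Real.cos α * Real.cos β)
          + 4 * (x - 1) * (√(1 - Real.cos α ^ 2) * √(1 - Real.cos β ^ 2)) := by
      have : 0 ≤ x - 1 := sub_nonneg.2 hx
      gcongr
      exact neg_sin_mul_sin_le_sqrt_mul_sqrt α β
    _ = zalcmanMajorant x lam (Real.cos α) (Real.cos β) := by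
      unfold zalcmanMajorant
      ring

theorem zalcman_functional_extreme_point_bound
    (n : ℕ) (hn : 2 ≤ n) (lam : ℝ) (hlam : 0 < lam) (s t : ℝ)
    (an a2n1 : ℂ)
    (han : an = (((n : ℂ) + 1) / 2) * Complex.exp (Complex.I * ((((n : ℝ) - 1) * t : ℝ) : ℂ))
        - (((n : ℂ) - 1) / 2) * Complex.exp (Complex.I * ((s + ((n : ℝ) - 2) * t : ℝ) : ℂ)))
    (ha2n1 : a2n1 = (n : ℂ) * Complex.exp (2 * Complex.I * ((((n : ℝ) - 1) * t : ℝ) : ℂ))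
        - ((n : ℂ) - 1) * Complex.exp (Complex.I * ((s + (2 * (n : ℝ) - 3) * t : ℝ) : ℂ))) :
    4 * (lam * an.re ^ 2 - a2n1.re) - 4 * (n : ℝ) ≤
      Ff n lam (Real.cos (((n : ℝ) - 1) * t)) (Real.cos (s + ((n : ℝ) - 2) * t)) := by
  rw [ha2n1.trans (extremePointCoeff_two_mul_sub_one n s t).symm, han]
  exact zalcman_functional_extreme_point_bound_general (mod_cast one_le_two.trans hn) lam s t
end

section
/- Let n ≥ 3 be an integer and λ a real number with λ ≥ (10n − 2)/(n+1)². Then for all (u,v) ∈ [−1,1] × [−1,1], F_{n,λ}(u,v) ≤ 4λn² − 12n + 4, and equality holds if and only if (u,v) = (1,−1) or (u,v) = (−1,1). -/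
section

variable {u v : ℝ}

lemma one_sub_sq_nonneg_of_mem_Icc (hu : u ∈ Set.Icc (-1 : ℝ) 1) : 0 ≤ 1 - u ^ 2 :=
  sub_nonneg.2 ((sq_le_one_iff_abs_le_one u).2 (abs_le.2 hu))

lemma sqrt_one_sub_sq_mul_sqrt_one_sub_sq_le (hu : u ∈ Set.Icc (-1 : ℝ) 1)
    (hv : v ∈ Set.Icc (-1 : ℝ) 1) : √(1 - u ^ 2) * √(1 - v ^ 2) ≤ 1 + u * v := by
  have amgm := two_mul_le_add_sq √(1 - u ^ 2) √(1 - v ^ 2)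
  rw [Real.sq_sqrt (one_sub_sq_nonneg_of_mem_Icc hu),
    Real.sq_sqrt (one_sub_sq_nonneg_of_mem_Icc hv)] at amgm
  linarith [sq_nonneg (u + v)]

lemma one_add_mul_nonneg (hu : u ∈ Set.Icc (-1 : ℝ) 1) (hv : v ∈ Set.Icc (-1 : ℝ) 1) :
    0 ≤ 1 + u * v :=
  le_trans (by positivity) (sqrt_one_sub_sq_mul_sqrt_one_sub_sq_le hu hv)

lemma one_add_mul_eq_zero_iff (hu : u ∈ Set.Icc (-1 : ℝ) 1) (hv : v ∈ Set.Icc (-1 : ℝ) 1) :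
    1 + u * v = 0 ↔ (u = 1 ∧ v = -1) ∨ (u = -1 ∧ v = 1) := by
  refine ⟨fun h ↦ ?_, by rintro (⟨rfl, rfl⟩ | ⟨rfl, rfl⟩) <;> norm_num⟩
  have hu' := one_sub_sq_nonneg_of_mem_Icc hu
  have hv' := one_sub_sq_nonneg_of_mem_Icc hv
  have hadd : u + v = 0 :=
    pow_eq_zero_iff two_ne_zero |>.1 (le_antisymm (by linarith) (sq_nonneg (u + v)))
  obtain rfl : v = -u := by linarith
  rcases sq_eq_one_iff.1 (by linarith : u ^ 2 = 1) with rfl | rfl <;> simp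

end

lemma four_lt_add_one_mul {x lam : ℝ} (hx : 1 < x) (hlam : 8 * x / (x + 1) ^ 2 ≤ lam) :
    4 < (x + 1) * lam :=
  calc
    4 < 8 * x / (x + 1) := by rw [lt_div_iff₀ (by positivity)]; linarith
    _ = (x + 1) * (8 * x / (x + 1) ^ 2) := by field_simp
    _ ≤ (x + 1) * lam := by gcongr

section Ff

variable {n : ℕ} {lam u v : ℝ}

lemma bound_sub_Ff (n : ℕ) (lam u v : ℝ) :
    4 * lam * (n : ℝ) ^ 2 - 12 * n + 4 - Ff n lam u v =
      (((n : ℝ) + 1) ^ 2 * lam - 8 * n) * (1 - u ^ 2) + ((n : ℝ) - 1) ^ 2 * lam * (1 - v ^ 2)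
        + 2 * ((n : ℝ) - 1) * (((n : ℝ) + 1) * lam - 4) * (1 + u * v)
        + 4 * ((n : ℝ) - 1) * (1 + u * v - √(1 - u ^ 2) * √(1 - v ^ 2)) := by
  unfold Ff
  ring

lemma le_bound_sub_Ff (hn : 1 ≤ n) (hlam : 8 * (n : ℝ) / ((n : ℝ) + 1) ^ 2 ≤ lam)
    (hu : u ∈ Set.Icc (-1 : ℝ) 1) (hv : v ∈ Set.Icc (-1 : ℝ) 1) :
    2 * ((n : ℝ) - 1) * (((n : ℝ) + 1) * lam - 4) * (1 + u * v) ≤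
      4 * lam * (n : ℝ) ^ 2 - 12 * n + 4 - Ff n lam u v := by
  have hn' : 0 ≤ (n : ℝ) - 1 := sub_nonneg.2 (by exact_mod_cast hn)
  have hlam₀ : 0 ≤ lam := le_trans (by positivity) hlam
  have hcoeff : 0 ≤ ((n : ℝ) + 1) ^ 2 * lam - 8 * n :=
    sub_nonneg.2 ((div_le_iff₀' (by positivity)).1 hlam)
  have hu_term := mul_nonneg hcoeff (one_sub_sq_nonneg_of_mem_Icc hu)
  have hv_term := mul_nonneg (by positivity : 0 ≤ ((n : ℝ) - 1) ^ 2 * lam)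
    (one_sub_sq_nonneg_of_mem_Icc hv)
  have hsqrt_term := mul_nonneg (by positivity : 0 ≤ 4 * ((n : ℝ) - 1))
    (sub_nonneg.2 (sqrt_one_sub_sq_mul_sqrt_one_sub_sq_le hu hv))
  rw [bound_sub_Ff]
  linarith

lemma Ff_one_neg_one (n : ℕ) (lam : ℝ) :
    Ff n lam 1 (-1) = 4 * lam * (n : ℝ) ^ 2 - 12 * n + 4 := by
  rw [Ff, one_pow, sub_self, Real.sqrt_zero]
  ring

lemma Ff_neg_neg (n : ℕ) (lam u v : ℝ) : Ff n lam (-u) (-v) = Ff n lam u v := by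
  simp [Ff]

end Ff

theorem F_bound_large_lambda_general
    (n : ℕ) (hn : 2 ≤ n) (lam : ℝ)
    (hlam : 8 * (n : ℝ) / ((n : ℝ) + 1) ^ 2 ≤ lam) :
    ∀ u v : ℝ, u ∈ Set.Icc (-1 : ℝ) 1 → v ∈ Set.Icc (-1 : ℝ) 1 →
      Ff n lam u v ≤ 4 * lam * (n : ℝ) ^ 2 - 12 * n + 4 ∧
      (Ff n lam u v = 4 * lam * (n : ℝ) ^ 2 - 12 * n + 4 ↔
        (u = 1 ∧ v = -1) ∨ (u = -1 ∧ v = 1)) := by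
  intro u v hu hv
  have hn' : (1 : ℝ) < n := by exact_mod_cast hn
  have hcoeff : 0 < 2 * ((n : ℝ) - 1) * (((n : ℝ) + 1) * lam - 4) :=
    mul_pos (by linarith) (sub_pos.2 (four_lt_add_one_mul hn' hlam))
  have huv := one_add_mul_nonneg hu hv
  have hgap := le_bound_sub_Ff (by lia) hlam hu hv
  refine ⟨sub_nonneg.1 ((mul_nonneg hcoeff.le huv).trans hgap), fun heq ↦ ?_, ?_⟩
  · rw [heq, sub_self] at hgap
    exact (one_add_mul_eq_zero_iff hu hv).1 (huv.antisymm' (nonpos_of_mul_nonpos_right hgap hcoeff))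
  · rintro (⟨rfl, rfl⟩ | ⟨rfl, rfl⟩)
    · exact Ff_one_neg_one n lam
    · simpa only [neg_neg] using (Ff_neg_neg n lam 1 (-1)).trans (Ff_one_neg_one n lam)

theorem F_bound_large_lambda
    (n : ℕ) (hn : 3 ≤ n) (lam : ℝ)
    (hlam : (10 * (n : ℝ) - 2) / ((n : ℝ) + 1) ^ 2 ≤ lam) :
    ∀ u v : ℝ, u ∈ Set.Icc (-1 : ℝ) 1 → v ∈ Set.Icc (-1 : ℝ) 1 →
      Ff n lam u v ≤ 4 * lam * (n : ℝ) ^ 2 - 12 * n + 4 ∧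
      (Ff n lam u v = 4 * lam * (n : ℝ) ^ 2 - 12 * n + 4 ↔
        (u = 1 ∧ v = -1) ∨ (u = -1 ∧ v = 1)) := by
  have hn' : (3 : ℝ) ≤ n := by exact_mod_cast hn
  refine F_bound_large_lambda_general n (by lia) lam (le_trans ?_ hlam)
  gcongr
  linarith
end

section
/- Let n ≥ 3 be an integer and λ a real number with 0 < λ ≤ 2n/(n² − n + 1). Then for all (u,v) ∈ [−1,1] × [−1,1], G_{n,λ}(u,v) ≤ 0. -/
/-- The quadratic form `G_{n,λ}(u,v)` from the paper. -/
noncomputable def Gf (n : ℕ) (lam u v : ℝ) : ℝ :=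
  (lam * ((n : ℝ) + 1) ^ 2 - 10 * n + 2) * u ^ 2
    - 2 * ((n : ℝ) - 1) * (lam * ((n : ℝ) + 1) - 2) * u * v
    + ((n : ℝ) - 1) * (lam * ((n : ℝ) - 1) - 2) * v ^ 2

/-!
The coefficient of `λ` in `G_{n,λ}(u,v)` is the square `((n + 1) u - (n - 1) v)²`, so `G` is
nondecreasing in `λ` and only the largest admissible value `λ = 2n / (n² - n + 1)` matters. There
the discriminant of the form vanishes, and `G` collapses to a nonpositive multiple of the square
`((2n - 1) u + v)²`.
-/

theorem sq_sub_self_add_one_pos {R : Type*} [CommRing R] [LinearOrder R] [IsStrictOrderedRing R]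
    (x : R) : 0 < x ^ 2 - x + 1 := by
  nlinarith [sq_nonneg (2 * x - 1)]

theorem Gf_sub_Gf (n : ℕ) (lam mu u v : ℝ) :
    Gf n mu u v - Gf n lam u v = (mu - lam) * ((n + 1) * u - (n - 1) * v) ^ 2 := by
  unfold Gf
  ring

theorem monotone_Gf (n : ℕ) (u v : ℝ) : Monotone fun lam ↦ Gf n lam u v := by
  intro lam mu h
  rw [← sub_nonneg, Gf_sub_Gf]
  exact mul_nonneg (sub_nonneg.2 h) (sq_nonneg _)

theorem Gf_two_mul_div (n : ℕ) (u v : ℝ) :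
    Gf n (2 * n / ((n : ℝ) ^ 2 - n + 1)) u v =
      -(2 * (n - 1) / ((n : ℝ) ^ 2 - n + 1) * ((2 * n - 1) * u + v) ^ 2) := by
  have hD : (n : ℝ) ^ 2 - n + 1 ≠ 0 := (sq_sub_self_add_one_pos (n : ℝ)).ne'
  rw [div_mul_eq_mul_div, ← neg_div, eq_div_iff hD]
  unfold Gf
  linear_combination ((n + 1) * u - (n - 1) * v) ^ 2 * div_mul_cancel₀ (2 * (n : ℝ)) hD

theorem G_nonpos_small_lambda_general {n : ℕ} (hn : 1 ≤ n) {lam : ℝ}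
    (hlam : lam ≤ 2 * (n : ℝ) / ((n : ℝ) ^ 2 - n + 1)) (u v : ℝ) : Gf n lam u v ≤ 0 := by
  have hn' : (0 : ℝ) ≤ n - 1 := sub_nonneg.2 (Nat.one_le_cast.2 hn)
  have hD : (0 : ℝ) < (n : ℝ) ^ 2 - n + 1 := sq_sub_self_add_one_pos _
  calc
    Gf n lam u v ≤ Gf n (2 * n / ((n : ℝ) ^ 2 - n + 1)) u v := monotone_Gf n u v hlam
    _ = -(2 * (n - 1) / ((n : ℝ) ^ 2 - n + 1) * ((2 * n - 1) * u + v) ^ 2) :=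
      Gf_two_mul_div n u v
    _ ≤ 0 := neg_nonpos.2 (by positivity)

theorem G_nonpos_small_lambda
    (n : ℕ) (hn : 3 ≤ n) (lam : ℝ) (hlam1 : 0 < lam)
    (hlam2 : lam ≤ 2 * (n : ℝ) / ((n : ℝ) ^ 2 - n + 1)) :
    ∀ u v : ℝ, u ∈ Set.Icc (-1 : ℝ) 1 → v ∈ Set.Icc (-1 : ℝ) 1 →
      Gf n lam u v ≤ 0 :=
  fun u v _ _ ↦ G_nonpos_small_lambda_general (by omega) hlam2 u v
end

section
/- Let n ≥ 3 be an integer and λ a real number with 2n/(n² − n + 1) < λ < (6n − 2)/(n² + n). Let (u,v) ∈ [−1,1] × [−1,1] be a boundary point of the square, i.e., |u| = 1 or |v| = 1. Then F_{n,λ}(u,v) ≤ A_{n,λ}, where A_{n,λ} = 4(n−1)²[λ(n−1) + 1]/(8n − (n+1)²λ) if 2n/(n² − n + 1) < λ ≤ (5n − 1)/(n² + n), and A_{n,λ} = 4λn² − 12n + 4 if (5n − 1)/(n² + n) < λ < (6n − 2)/(n² + n). -/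
/-! On the boundary `(1 - u²)(1 - v²) = 0`, so the square roots disappear and what is left is a
quadratic form `-d u² - 2b uv + c v²`. With `s = -uv`, so that `u² + v² = 1 + s²`, it equals
`c + 2bs - ds² - (c + d)(1 - v²)`.

The threshold for `λ` is the point where `b = d`. Up to it `d > 0` and `c + d ≥ 0`, so the form is
at most the vertex value `c + b² / d` of the parabola `c + 2bs - ds²`. Above it `b > d` and
`b, c > 0`, and on each side of the square the form is a quadratic in `s` that is largest at
`s = 1`, with value `c + 2b - d`. These two values are the two branches of `A_{n,λ}`. -/

theorem quadratic_le_vertex {K : Type*} [Field K] [LinearOrder K] [IsStrictOrderedRing K]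
    {d : K} (hd : 0 < d) (b c s : K) : c + 2 * b * s - d * s ^ 2 ≤ c + b ^ 2 / d := by
  have complete_square : c + b ^ 2 / d - (c + 2 * b * s - d * s ^ 2) = (d * s - b) ^ 2 / d := by
    field_simp
    ring
  rw [← sub_nonneg, complete_square]
  positivity

theorem quadratic_le_eval_one {R : Type*} [CommRing R] [LinearOrder R] [IsOrderedRing R]
    {b d s : R} (hb : 0 ≤ b) (hdb : d ≤ b) (hs : |s| ≤ 1) (c : R) :
    c + 2 * b * s - d * s ^ 2 ≤ c + 2 * b - d := by
  obtain ⟨hs_lower, hs_upper⟩ := abs_le.1 hs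
  have factored : c + 2 * b - d - (c + 2 * b * s - d * s ^ 2)
      = (1 - s) * ((b - d) * (1 + s) + b * (1 - s)) := by ring
  have h_left : 0 ≤ 1 - s := sub_nonneg.2 hs_upper
  have h_right : 0 ≤ 1 + s := neg_le_iff_add_nonneg'.1 hs_lower
  rw [← sub_nonneg, factored]
  exact mul_nonneg h_left
    (add_nonneg (mul_nonneg (sub_nonneg.2 hdb) h_right) (mul_nonneg hb h_left))

/-- The quadratic form `-d u² - 2b uv + c v²`, the part of `Ff` that survives on the boundary of the
square. The signs are chosen so that `b`, `c`, `d` are positive in the range of interest. -/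
def boundaryForm {R : Type*} [CommRing R] (d b c u v : R) : R :=
  -d * u ^ 2 - 2 * b * u * v + c * v ^ 2

section BoundaryForm

variable {R : Type*} [CommRing R] [LinearOrder R] [IsOrderedRing R] {b c d u v : R}

theorem boundaryForm_of_abs_left_eq_one (hu : |u| = 1) :
    boundaryForm d b c u v = -d + 2 * b * (-(u * v)) - (-c) * (-(u * v)) ^ 2 := by
  have hu_sq : u ^ 2 = 1 := by rw [← sq_abs, hu, one_pow]
  unfold boundaryForm
  linear_combination (-d - c * v ^ 2) * hu_sq

theorem boundaryForm_of_abs_right_eq_one (hv : |v| = 1) :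
    boundaryForm d b c u v = c + 2 * b * (-(u * v)) - d * (-(u * v)) ^ 2 := by
  have hv_sq : v ^ 2 = 1 := by rw [← sq_abs, hv, one_pow]
  unfold boundaryForm
  linear_combination (c + d * u ^ 2) * hv_sq

theorem boundaryForm_le_quadratic (hcd : 0 ≤ c + d) (hv : |v| ≤ 1) (hbd : |u| = 1 ∨ |v| = 1) :
    boundaryForm d b c u v ≤ c + 2 * b * (-(u * v)) - d * (-(u * v)) ^ 2 := by
  rcases hbd with hu_one | hv_one
  · have hu_sq : u ^ 2 = 1 := by rw [← sq_abs, hu_one, one_pow]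
    have gap : c + 2 * b * (-(u * v)) - d * (-(u * v)) ^ 2 - boundaryForm d b c u v
        = (c + d) * (1 - v ^ 2) := by
      unfold boundaryForm
      linear_combination d * (1 - v ^ 2) * hu_sq
    have hv_sq : v ^ 2 ≤ 1 := by
      rw [← sq_abs]
      exact pow_le_one₀ (abs_nonneg v) hv
    rw [← sub_nonneg, gap]
    exact mul_nonneg hcd (sub_nonneg.2 hv_sq)
  · exact (boundaryForm_of_abs_right_eq_one hv_one).le

theorem boundaryForm_le_eval_one (hb : 0 ≤ b) (hdb : d ≤ b) (hcb : -c ≤ b)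
    (hu : |u| ≤ 1) (hv : |v| ≤ 1) (hbd : |u| = 1 ∨ |v| = 1) :
    boundaryForm d b c u v ≤ c + 2 * b - d := by
  have hs : |-(u * v)| ≤ 1 := by
    rw [abs_neg, abs_mul]
    exact mul_le_one₀ hu (abs_nonneg v) hv
  rcases hbd with hu_one | hv_one
  · calc
      boundaryForm d b c u v
        = -d + 2 * b * (-(u * v)) - (-c) * (-(u * v)) ^ 2 := boundaryForm_of_abs_left_eq_one hu_one
      _ ≤ -d + 2 * b - (-c) := quadratic_le_eval_one hb hcb hs (-d)
      _ = c + 2 * b - d := by ring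
  · exact (boundaryForm_of_abs_right_eq_one hv_one).trans_le (quadratic_le_eval_one hb hdb hs c)

end BoundaryForm

/-- The coefficient of `-u²` in `Ff`, at a real index `x` in place of `n`. -/
def coeffU (x lam : ℝ) : ℝ := 8 * x - (x + 1) ^ 2 * lam

/-- The coefficient of `-2uv` in `Ff`, at a real index `x` in place of `n`. -/
def coeffUV (x lam : ℝ) : ℝ := (x - 1) * ((x + 1) * lam - 2)

/-- The coefficient of `v²` in `Ff`, at a real index `x` in place of `n`. -/
def coeffV (x lam : ℝ) : ℝ := (x - 1) ^ 2 * lam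

/-- The function `Ff` with the natural number `n` replaced by a real index `x`. -/
noncomputable def realF (x lam u v : ℝ) : ℝ :=
  boundaryForm (coeffU x lam) (coeffUV x lam) (coeffV x lam) u v
    + 4 * (x - 1) * √(1 - u ^ 2) * √(1 - v ^ 2)

/-- The constant `A_{n,λ}` of the boundary estimate, with `n` replaced by a real index `x`. -/
noncomputable def boundaryBound (x lam : ℝ) : ℝ :=
  if lam ≤ (5 * x - 1) / (x ^ 2 + x) then
    4 * (x - 1) ^ 2 * (lam * (x - 1) + 1) / (8 * x - (x + 1) ^ 2 * lam)
  else
    4 * lam * x ^ 2 - 12 * x + 4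

theorem Ff_eq_realF (n : ℕ) (lam u v : ℝ) : Ff n lam u v = realF n lam u v := by
  unfold Ff realF boundaryForm coeffU coeffUV coeffV
  ring

theorem realF_eq_boundaryForm (x lam : ℝ) {u v : ℝ} (hbd : |u| = 1 ∨ |v| = 1) :
    realF x lam u v = boundaryForm (coeffU x lam) (coeffUV x lam) (coeffV x lam) u v := by
  have sqrt_eq_zero {w : ℝ} (hw : |w| = 1) : √(1 - w ^ 2) = 0 := by
    rw [← sq_abs, hw, one_pow, sub_self, Real.sqrt_zero]
  rcases hbd with hu | hv
  · simp only [realF, sqrt_eq_zero hu, mul_zero, zero_mul, add_zero]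
  · simp only [realF, sqrt_eq_zero hv, mul_zero, add_zero]

section Coefficients

variable {x lam : ℝ}

theorem coeffUV_le_coeffU_iff (hx : 0 < x) :
    coeffUV x lam ≤ coeffU x lam ↔ lam ≤ (5 * x - 1) / (x ^ 2 + x) := by
  have gap : coeffU x lam - coeffUV x lam = 2 * (5 * x - 1 - lam * (x ^ 2 + x)) := by
    unfold coeffU coeffUV
    ring
  rw [le_div_iff₀ (by positivity), ← sub_nonneg, gap, mul_nonneg_iff_of_pos_left two_pos,
    sub_nonneg]

theorem coeffU_pos (hx : 1 < x) (h : coeffUV x lam ≤ coeffU x lam) : 0 < coeffU x lam := by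
  have split : 2 * x * coeffU x lam
      = (x + 1) * (coeffU x lam - coeffUV x lam) + 2 * (3 * x - 1) * (x - 1) := by
    unfold coeffU coeffUV
    ring
  have h_gap : 0 ≤ (x + 1) * (coeffU x lam - coeffUV x lam) :=
    mul_nonneg (by linarith) (sub_nonneg.2 h)
  have h_rest : 0 < 2 * (3 * x - 1) * (x - 1) := mul_pos (by linarith) (by linarith)
  exact pos_of_mul_pos_right (by linarith : 0 < 2 * x * coeffU x lam) (by linarith)

theorem coeffV_add_coeffU_nonneg (hx : 1 ≤ x) (h : coeffUV x lam ≤ coeffU x lam) :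
    0 ≤ coeffV x lam + coeffU x lam := by
  have split : (x + 1) * (coeffV x lam + coeffU x lam)
      = 2 * (coeffU x lam - coeffUV x lam) + 4 * (2 * x - 1) * (x - 1) := by
    unfold coeffV coeffU coeffUV
    ring
  have h_rest : 0 ≤ 4 * (2 * x - 1) * (x - 1) := mul_nonneg (by linarith) (by linarith)
  exact nonneg_of_mul_nonneg_right (by linarith : 0 ≤ (x + 1) * (coeffV x lam + coeffU x lam))
    (by linarith)

theorem lam_pos_of_coeffU_lt_coeffUV (hx : 1 ≤ x) (h : coeffU x lam < coeffUV x lam) :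
    0 < lam := by
  have h_threshold : (5 * x - 1) / (x ^ 2 + x) < lam :=
    lt_of_not_ge fun h_le => h.not_ge ((coeffUV_le_coeffU_iff (by linarith)).2 h_le)
  exact (div_pos (by linarith) (by positivity)).trans h_threshold

theorem coeffUV_nonneg (hx : 1 ≤ x) (h : coeffU x lam < coeffUV x lam) :
    0 ≤ coeffUV x lam := by
  have split : 2 * x * coeffUV x lam
      = (x - 1) * (coeffUV x lam - coeffU x lam) + 2 * (3 * x - 1) * (x - 1) := by
    unfold coeffU coeffUV
    ring
  have h_gap : 0 ≤ (x - 1) * (coeffUV x lam - coeffU x lam) :=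
    mul_nonneg (by linarith) (sub_nonneg.2 h.le)
  have h_rest : 0 ≤ 2 * (3 * x - 1) * (x - 1) := mul_nonneg (by linarith) (by linarith)
  exact nonneg_of_mul_nonneg_right (by linarith : 0 ≤ 2 * x * coeffUV x lam) (by linarith)

theorem boundaryBound_eq_vertex (hx : 1 < x) (h : coeffUV x lam ≤ coeffU x lam) :
    boundaryBound x lam = coeffV x lam + coeffUV x lam ^ 2 / coeffU x lam := by
  have hU : coeffU x lam ≠ 0 := (coeffU_pos hx h).ne'
  rw [boundaryBound, if_pos ((coeffUV_le_coeffU_iff (by linarith)).1 h), ← coeffU,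
    div_eq_iff hU, add_mul, div_mul_cancel₀ _ hU]
  unfold coeffV coeffUV coeffU
  ring

theorem boundaryBound_eq_eval_one (hx : 0 < x) (h : coeffU x lam < coeffUV x lam) :
    boundaryBound x lam = coeffV x lam + 2 * coeffUV x lam - coeffU x lam := by
  rw [boundaryBound, if_neg (mt (coeffUV_le_coeffU_iff hx).2 h.not_ge)]
  unfold coeffV coeffUV coeffU
  ring

end Coefficients

theorem F_boundary_bound_general {x : ℝ} (hx : 1 < x) (lam : ℝ) {u v : ℝ}
    (hu : |u| ≤ 1) (hv : |v| ≤ 1) (hbd : |u| = 1 ∨ |v| = 1) :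
    realF x lam u v ≤ boundaryBound x lam := by
  rw [realF_eq_boundaryForm x lam hbd]
  rcases le_or_gt (coeffUV x lam) (coeffU x lam) with h | h
  · rw [boundaryBound_eq_vertex hx h]
    exact (boundaryForm_le_quadratic (coeffV_add_coeffU_nonneg hx.le h) hv hbd).trans
      (quadratic_le_vertex (coeffU_pos hx h) _ _ _)
  · have hUV : 0 ≤ coeffUV x lam := coeffUV_nonneg hx.le h
    have hV : 0 ≤ coeffV x lam :=
      mul_nonneg (sq_nonneg _) (lam_pos_of_coeffU_lt_coeffUV hx.le h).le
    rw [boundaryBound_eq_eval_one (by linarith) h]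
    exact boundaryForm_le_eval_one hUV h.le ((neg_nonpos.2 hV).trans hUV) hu hv hbd

theorem F_boundary_bound
    (n : ℕ) (hn : 3 ≤ n) (lam : ℝ)
    (hlam1 : 2 * (n : ℝ) / ((n : ℝ) ^ 2 - n + 1) < lam)
    (hlam2 : lam < (6 * (n : ℝ) - 2) / ((n : ℝ) ^ 2 + n))
    (u v : ℝ) (hu : u ∈ Set.Icc (-1 : ℝ) 1) (hv : v ∈ Set.Icc (-1 : ℝ) 1)
    (hbd : |u| = 1 ∨ |v| = 1) :
    Ff n lam u v ≤
      if lam ≤ (5 * (n : ℝ) - 1) / ((n : ℝ) ^ 2 + n) then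
        4 * ((n : ℝ) - 1) ^ 2 * (lam * ((n : ℝ) - 1) + 1)
          / (8 * (n : ℝ) - ((n : ℝ) + 1) ^ 2 * lam)
      else
        4 * lam * (n : ℝ) ^ 2 - 12 * n + 4 := by
  rw [Ff_eq_realF]
  have hn_one : (1 : ℝ) < n := by exact_mod_cast (by lia : 1 < n)
  exact F_boundary_bound_general hn_one lam (abs_le.2 hu) (abs_le.2 hv) hbd
end

section
/- Let n ≥ 3 be an integer and λ a real number with 2n/(n² − n + 1) < λ < (6n − 2)/(n² + n). Suppose (u,v) ∈ (−1,1) × (−1,1) with (u,v) ≠ (0,0) is a critical point of F_{n,λ}, i.e., both partial derivatives of F_{n,λ} vanish at (u,v). Then v² = (√(nλ) + √(2−λ))²·[(n−1)λ − √(λn(2−λ))] / ((n−1)²λ²), u·v = [(n+1)λ − 2]·[λ(n−1) − √(λn(2−λ))] / ((n−1)λ·[λ(n−1) − 2√(λn(2−λ))]), and u² = [λ(n−1) − 2√(λn(2−λ)) + 2]·[(n−1)λ − √(λn(2−λ))] / [λ(n−1) − 2√(λn(2−λ))]². -/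
/-!
At a critical point put `t = √(1 - v²) / √(1 - u²)`. The two derivative equations say that `(u, v)`
lies in the kernel of a symmetric `2 × 2` matrix depending on `t`. Since `(u, v) ≠ (0, 0)`, its
determinant vanishes, which simplifies to `((ν - 1) λ (t + 1))² = 4 λ ν (2 - λ)` and so determines
`t > 0`. The kernel equation now gives the ratio of `u` and `v`, and `1 - v² = t² (1 - u²)` fixes
their size.
-/

open Real Set

lemma one_sub_sq_pos {x : ℝ} (hx : x ∈ Ioo (-1 : ℝ) 1) : 0 < 1 - x ^ 2 :=
  sub_pos.2 ((sq_lt_one_iff_abs_lt_one x).2 (abs_lt.2 hx))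

lemma hasDerivAt_sqrt_one_sub_sq {x : ℝ} (hx : x ∈ Ioo (-1 : ℝ) 1) :
    HasDerivAt (fun y : ℝ => √(1 - y ^ 2)) (-x / √(1 - x ^ 2)) x := by
  have h := (((hasDerivAt_id' x).fun_pow 2).const_sub 1).sqrt (one_sub_sq_pos hx).ne'
  exact h.congr_deriv (by ring)

/-- A binary quadratic form plus a multiple of `√(1 - u²) √(1 - v²)`: the shape shared by all the
functions `F_{n,λ}`. The factors `2` make the critical point equations free of numerical factors. -/
noncomputable def sqrtForm (α β γ δ u v : ℝ) : ℝ :=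
  α * u ^ 2 - 2 * β * u * v + 2 * γ * √(1 - u ^ 2) * √(1 - v ^ 2) + δ * v ^ 2

lemma sqrtForm_swap (α β γ δ u v : ℝ) : sqrtForm α β γ δ u v = sqrtForm δ β γ α v u := by
  unfold sqrtForm
  ring

section sqrtForm

variable {α β γ δ u v : ℝ}

lemma hasDerivAt_sqrtForm_fst (hu : u ∈ Ioo (-1 : ℝ) 1) :
    HasDerivAt (fun x => sqrtForm α β γ δ x v)
      (2 * ((α - γ * (√(1 - v ^ 2) / √(1 - u ^ 2))) * u - β * v)) u := by
  have h := (((((hasDerivAt_id' u).fun_pow 2).const_mul α).sub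
    (((hasDerivAt_id' u).const_mul (2 * β)).mul_const v)).add
    (((hasDerivAt_sqrt_one_sub_sq hu).const_mul (2 * γ)).mul_const √(1 - v ^ 2))).add_const
    (δ * v ^ 2)
  exact h.congr_deriv (by ring)

lemma deriv_sqrtForm_fst_eq_zero_iff (hu : u ∈ Ioo (-1 : ℝ) 1) :
    deriv (fun x => sqrtForm α β γ δ x v) u = 0 ↔
      (α - γ * (√(1 - v ^ 2) / √(1 - u ^ 2))) * u = β * v := by
  rw [(hasDerivAt_sqrtForm_fst hu).deriv, mul_eq_zero_iff_left two_ne_zero, sub_eq_zero]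

lemma deriv_sqrtForm_snd_eq_zero_iff (hv : v ∈ Ioo (-1 : ℝ) 1) :
    deriv (fun y => sqrtForm α β γ δ u y) v = 0 ↔
      (δ - γ * (√(1 - u ^ 2) / √(1 - v ^ 2))) * v = β * u := by
  simp only [sqrtForm_swap α β γ δ u, deriv_sqrtForm_fst_eq_zero_iff hv]

end sqrtForm

lemma mul_eq_mul_of_mul_eq_mul_of_ne_zero {R : Type*} [CommRing R] [IsDomain R]
    {a b c d u v : R} (huv : (u, v) ≠ (0, 0)) (h₁ : a * u = b * v) (h₂ : d * v = c * u) :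
    a * d = b * c := by
  by_cases hu : u = 0
  · have hv : v ≠ 0 := fun hv => huv (by rw [hu, hv])
    exact mul_right_cancel₀ hv (by linear_combination a * h₂ + c * h₁)
  · exact mul_right_cancel₀ hu (by linear_combination d * h₁ + b * h₂)

/-- `F_{ν,λ}` with a real parameter `ν` in place of the integer `n`. -/
noncomputable def realFf (ν lam : ℝ) : ℝ → ℝ → ℝ :=
  sqrtForm ((ν + 1) ^ 2 * lam - 8 * ν) ((ν - 1) * ((ν + 1) * lam - 2)) (2 * (ν - 1))
    ((ν - 1) ^ 2 * lam)

lemma Ff_eq_realFf (n : ℕ) (lam u v : ℝ) : Ff n lam u v = realFf n lam u v := by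
  unfold Ff realFf sqrtForm
  ring

section Algebra

variable {ν lam t u v : ℝ}

lemma quadratic_of_det_eq (hν : ν ≠ 1) (ht : t ≠ 0)
    (hdet : ((ν + 1) ^ 2 * lam - 8 * ν - 2 * (ν - 1) * t)
        * ((ν - 1) ^ 2 * lam - 2 * (ν - 1) * t⁻¹)
      = (ν - 1) * ((ν + 1) * lam - 2) * ((ν - 1) * ((ν + 1) * lam - 2))) :
    (ν + 1) ^ 2 * lam - 8 * ν = -((ν - 1) ^ 2 * lam * t * (t + 2)) := by
  apply mul_left_cancel₀ (mul_ne_zero two_ne_zero (sub_ne_zero.2 hν))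
  linear_combination (-t) * hdet
    + (4 * (ν - 1) ^ 2 * t - 2 * (ν - 1) * ((ν + 1) ^ 2 * lam - 8 * ν)) * mul_inv_cancel₀ ht

lemma mul_add_one_eq_two_mul_sqrt (hν : 1 < ν) (hlam : 0 < lam) (hlam2 : lam ≤ 2) (ht : 0 < t)
    (hquad : (ν + 1) ^ 2 * lam - 8 * ν = -((ν - 1) ^ 2 * lam * t * (t + 2))) :
    (ν - 1) * lam * (t + 1) = 2 * √(lam * ν * (2 - lam)) := by
  have hD : 0 < (ν - 1) * lam := mul_pos (sub_pos.2 hν) hlam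
  have hrad : 0 ≤ lam * ν * (2 - lam) :=
    mul_nonneg (mul_nonneg hlam.le (by linarith)) (sub_nonneg.2 hlam2)
  refine (sq_eq_sq₀ (mul_pos hD (by positivity)).le (by positivity)).1 ?_
  linear_combination lam * hquad - 4 * sq_sqrt hrad

lemma mul_snd_eq_of_quadratic (hν : ν ≠ 1)
    (hquad : (ν + 1) ^ 2 * lam - 8 * ν = -((ν - 1) ^ 2 * lam * t * (t + 2)))
    (hker : ((ν + 1) ^ 2 * lam - 8 * ν - 2 * (ν - 1) * t) * u
      = (ν - 1) * ((ν + 1) * lam - 2) * v) :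
    ((ν + 1) * lam - 2) * v = -(t * ((ν - 1) * lam * (t + 2) + 2) * u) := by
  apply mul_left_cancel₀ (sub_ne_zero.2 hν)
  linear_combination u * hquad - hker

lemma sq_eq_of_quadratic
    (hquad : (ν + 1) ^ 2 * lam - 8 * ν = -((ν - 1) ^ 2 * lam * t * (t + 2))) :
    ((ν + 1) * lam - 2) ^ 2
      = (2 - (ν - 1) * lam * t) * ((ν - 1) * lam * (t + 2) + 2) := by
  linear_combination lam * hquad

lemma identities_of_kernel_of_circle {B D : ℝ} (hD : 0 < D) (ht : 0 < t)
    (hB : B ^ 2 = (2 - D * t) * (D * (t + 2) + 2))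
    (hker : B * v = -(t * (D * (t + 2) + 2) * u))
    (hcircle : 1 - v ^ 2 = t ^ 2 * (1 - u ^ 2)) :
    2 * D * v ^ 2 = (D * (t + 2) + 2) * (1 - t) ∧
    2 * D * t * (u * v) = -(B * (1 - t)) ∧
    2 * D * t ^ 2 * u ^ 2 = (2 - D * t) * (1 - t) := by
  have hW : D * (t + 2) + 2 ≠ 0 := by positivity
  have ht1 : t + 1 ≠ 0 := by positivity
  have hratio : (2 - D * t) * v ^ 2 = t ^ 2 * (D * (t + 2) + 2) * u ^ 2 := by
    apply mul_left_cancel₀ hW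
    linear_combination (-v ^ 2) * hB + (B * v - t * (D * (t + 2) + 2) * u) * hker
  have hv : 2 * D * v ^ 2 = (D * (t + 2) + 2) * (1 - t) := by
    apply mul_left_cancel₀ ht1
    linear_combination (D * (t + 2) + 2) * (-hcircle) - hratio
  refine ⟨hv, mul_left_cancel₀ hW ?_, mul_left_cancel₀ hW ?_⟩
  · linear_combination (2 * D * v) * hker - B * hv
  · linear_combination (-2 * D) * hratio + (2 - D * t) * hv

lemma sqrt_add_sqrt_sq (hν : 0 ≤ ν) (hlam : 0 ≤ lam) (hlam2 : lam ≤ 2) :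
    (√(ν * lam) + √(2 - lam)) ^ 2 = (ν - 1) * lam + 2 + 2 * √(lam * ν * (2 - lam)) := by
  rw [mul_comm lam ν, sqrt_mul (mul_nonneg hν hlam), add_sq, sq_sqrt (mul_nonneg hν hlam),
    sq_sqrt (sub_nonneg.2 hlam2)]
  ring

end Algebra

lemma exists_ratio_of_critical {ν lam u v : ℝ} (hν : ν ≠ 1)
    (hu : u ∈ Ioo (-1 : ℝ) 1) (hv : v ∈ Ioo (-1 : ℝ) 1) (hne : (u, v) ≠ (0, 0))
    (hcu : deriv (fun x => realFf ν lam x v) u = 0)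
    (hcv : deriv (fun y => realFf ν lam u y) v = 0) :
    ∃ t > 0, 1 - v ^ 2 = t ^ 2 * (1 - u ^ 2) ∧
      (ν + 1) ^ 2 * lam - 8 * ν = -((ν - 1) ^ 2 * lam * t * (t + 2)) ∧
      ((ν + 1) * lam - 2) * v = -(t * ((ν - 1) * lam * (t + 2) + 2) * u) := by
  have hu1 : 0 < 1 - u ^ 2 := one_sub_sq_pos hu
  have hv1 : 0 < 1 - v ^ 2 := one_sub_sq_pos hv
  have ht : 0 < √(1 - v ^ 2) / √(1 - u ^ 2) := div_pos (sqrt_pos.2 hv1) (sqrt_pos.2 hu1)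
  have hker := (deriv_sqrtForm_fst_eq_zero_iff hu).1 hcu
  have hker' := (deriv_sqrtForm_snd_eq_zero_iff hv).1 hcv
  rw [← inv_div √(1 - v ^ 2)] at hker'
  have hquad := quadratic_of_det_eq hν ht.ne'
    (mul_eq_mul_of_mul_eq_mul_of_ne_zero hne hker hker')
  refine ⟨_, ht, ?_, hquad, mul_snd_eq_of_quadratic hν hquad hker⟩
  rw [div_pow, sq_sqrt hu1.le, sq_sqrt hv1.le, div_mul_cancel₀ _ hu1.ne']

lemma lam_mem_Ioo_zero_two {n lam : ℝ} (hn : 0 < n) (h₁ : 2 * n / (n ^ 2 - n + 1) < lam)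
    (h₂ : lam < (6 * n - 2) / (n ^ 2 + n)) : lam ∈ Ioo (0 : ℝ) 2 := by
  have hden : 0 < n ^ 2 - n + 1 := by nlinarith [sq_nonneg (n - 1)]
  refine ⟨(by positivity : 0 < 2 * n / (n ^ 2 - n + 1)).trans h₁, h₂.trans_le ?_⟩
  rw [div_le_iff₀ (by positivity)]
  nlinarith [sq_nonneg (n - 1)]

theorem F_nonzero_critical_points_general {ν lam u v : ℝ} (hν : 1 < ν)
    (hlam : 0 < lam) (hlam2 : lam ≤ 2)
    (hu : u ∈ Ioo (-1 : ℝ) 1) (hv : v ∈ Ioo (-1 : ℝ) 1) (hne : (u, v) ≠ (0, 0))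
    (hcu : deriv (fun x => realFf ν lam x v) u = 0)
    (hcv : deriv (fun y => realFf ν lam u y) v = 0) :
    v ^ 2 = (√(ν * lam) + √(2 - lam)) ^ 2 * ((ν - 1) * lam - √(lam * ν * (2 - lam)))
        / ((ν - 1) ^ 2 * lam ^ 2) ∧
    u * v = ((ν + 1) * lam - 2) * (lam * (ν - 1) - √(lam * ν * (2 - lam)))
        / ((ν - 1) * lam * (lam * (ν - 1) - 2 * √(lam * ν * (2 - lam)))) ∧
    u ^ 2 = (lam * (ν - 1) - 2 * √(lam * ν * (2 - lam)) + 2)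
        * ((ν - 1) * lam - √(lam * ν * (2 - lam)))
        / (lam * (ν - 1) - 2 * √(lam * ν * (2 - lam))) ^ 2 := by
  obtain ⟨t, ht, hcircle, hquad, hker⟩ := exists_ratio_of_critical hν.ne' hu hv hne hcu hcv
  have hD : 0 < (ν - 1) * lam := mul_pos (sub_pos.2 hν) hlam
  obtain ⟨hvv, huv, huu⟩ :=
    identities_of_kernel_of_circle hD ht (sq_eq_of_quadratic hquad) hker hcircle
  have hs : √(lam * ν * (2 - lam)) = (ν - 1) * lam * (t + 1) / 2 := by
    linarith [mul_add_one_eq_two_mul_sqrt hν hlam hlam2 ht hquad]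
  have hE : lam * (ν - 1) - 2 * √(lam * ν * (2 - lam)) = -((ν - 1) * lam * t) := by
    linear_combination (-2) * hs
  have hE0 : -((ν - 1) * lam * t) ≠ 0 := neg_ne_zero.2 (mul_pos hD ht).ne'
  rw [sqrt_add_sqrt_sq (by linarith) hlam.le hlam2, hE, hs, ← mul_pow,
    eq_div_iff (pow_ne_zero 2 hD.ne'), eq_div_iff (mul_ne_zero hD.ne' hE0),
    eq_div_iff (pow_ne_zero 2 hE0)]
  refine ⟨?_, ?_, ?_⟩
  · linear_combination (ν - 1) * lam / 2 * hvv
  · linear_combination -((ν - 1) * lam / 2) * huv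
  · linear_combination (ν - 1) * lam / 2 * huu

theorem F_nonzero_critical_points
    (n : ℕ) (hn : 3 ≤ n) (lam : ℝ)
    (hlam1 : 2 * (n : ℝ) / ((n : ℝ) ^ 2 - n + 1) < lam)
    (hlam2 : lam < (6 * (n : ℝ) - 2) / ((n : ℝ) ^ 2 + n))
    (u v : ℝ) (hu : u ∈ Set.Ioo (-1 : ℝ) 1) (hv : v ∈ Set.Ioo (-1 : ℝ) 1)
    (hne : (u, v) ≠ (0, 0))
    (hcu : deriv (fun x : ℝ => Ff n lam x v) u = 0)
    (hcv : deriv (fun y : ℝ => Ff n lam u y) v = 0) :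
    v ^ 2 = (Real.sqrt ((n : ℝ) * lam) + Real.sqrt (2 - lam)) ^ 2
        * (((n : ℝ) - 1) * lam - Real.sqrt (lam * n * (2 - lam)))
        / (((n : ℝ) - 1) ^ 2 * lam ^ 2) ∧
    u * v = (((n : ℝ) + 1) * lam - 2) * (lam * ((n : ℝ) - 1) - Real.sqrt (lam * n * (2 - lam)))
        / (((n : ℝ) - 1) * lam * (lam * ((n : ℝ) - 1) - 2 * Real.sqrt (lam * n * (2 - lam)))) ∧
    u ^ 2 = (lam * ((n : ℝ) - 1) - 2 * Real.sqrt (lam * n * (2 - lam)) + 2)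
        * (((n : ℝ) - 1) * lam - Real.sqrt (lam * n * (2 - lam)))
        / (lam * ((n : ℝ) - 1) - 2 * Real.sqrt (lam * n * (2 - lam))) ^ 2 := by
  have hn1 : (1 : ℝ) < n := by exact_mod_cast (by lia : 1 < n)
  obtain ⟨hlam, hlam'⟩ := lam_mem_Ioo_zero_two (one_pos.trans hn1) hlam1 hlam2
  simp only [Ff_eq_realFf] at hcu hcv
  exact F_nonzero_critical_points_general hn1 hlam hlam'.le hu hv hne hcu hcv
end

section
/- Let n ≥ 3 be an integer and λ a real number with (3n + √(5n² − 4n))/(n² + n) ≤ λ < (6n − 2)/(n² + n). If (u,v) ∈ (−1,1) × (−1,1) is a critical point of F_{n,λ} (both partial derivatives vanish at (u,v)), then (u,v) = (0,0); moreover F_{n,λ}(0,0) = 4(n−1). -/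
/-!
Put `r = √(1 - v²) / √(1 - u²)`. The two critical point equations form a linear system in `(u, v)`
whose matrix depends on `r`. A nonzero solution makes its determinant vanish, which for `F_{n,λ}`
means `λ (n - 1)² (r + 1)² = 4 n (2 - λ)`. The lower bound on `λ` then gives
`(n - 1) (r + 1) ≤ n ((n + 1) λ - 4)`, which by the first equation of the system says `|v| ≤ |u|`.
It also rules out `r ≥ 1`, which would force `λ ≥ (6 n - 2) / (n² + n)`, too large for the
determinant identity. But `r < 1` says `|u| < |v|`, a contradiction.
-/

open Set

/-- The quadratic form `a u² - 2 b u v + c v²` plus the coupling `2 k √(1 - u²) √(1 - v²)`: the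
shape shared by all the functions `F_{n,λ}`. The factors `2` make the gradient equations read
`(a - k r) u = b v` and `(c - k r⁻¹) v = b u`, with `r = √(1 - v²) / √(1 - u²)`. -/
noncomputable def semicircleForm (a b c k u v : ℝ) : ℝ :=
  a * u ^ 2 - 2 * b * u * v + c * v ^ 2 + 2 * k * √(1 - u ^ 2) * √(1 - v ^ 2)

section SemicircleForm

variable {a b c k u v : ℝ}

lemma semicircleForm_swap (a b c k u v : ℝ) :
    semicircleForm a b c k u v = semicircleForm c b a k v u := by
  unfold semicircleForm
  ring

lemma one_sub_sq_pos_of_mem_Ioo (hu : u ∈ Ioo (-1) 1) : 0 < 1 - u ^ 2 :=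
  sub_pos.2 <| (sq_lt_one_iff_abs_lt_one u).2 <| abs_lt.2 hu

lemma hasDerivAt_semicircleForm_left (hu : u ∈ Ioo (-1) 1) :
    HasDerivAt (fun x ↦ semicircleForm a b c k x v)
      (2 * ((a - k * (√(1 - v ^ 2) / √(1 - u ^ 2))) * u - b * v)) u := by
  have hsq : HasDerivAt (fun x : ℝ ↦ x ^ 2) (2 * u) u := by
    simpa using hasDerivAt_pow 2 u
  have hsqrt := (hsq.const_sub 1).sqrt (one_sub_sq_pos_of_mem_Ioo hu).ne'
  have hlin := ((hasDerivAt_id u).const_mul (2 * b)).mul_const v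
  refine ((((hsq.const_mul a).sub hlin).add_const (c * v ^ 2)).add
    ((hsqrt.const_mul (2 * k)).mul_const √(1 - v ^ 2))).congr_deriv ?_
  ring

lemma mul_eq_of_deriv_semicircleForm_left_eq_zero (hu : u ∈ Ioo (-1) 1)
    (h : deriv (fun x ↦ semicircleForm a b c k x v) u = 0) :
    (a - k * (√(1 - v ^ 2) / √(1 - u ^ 2))) * u = b * v := by
  rw [(hasDerivAt_semicircleForm_left hu).deriv] at h
  linarith

lemma mul_eq_of_deriv_semicircleForm_right_eq_zero (hv : v ∈ Ioo (-1) 1)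
    (h : deriv (fun y ↦ semicircleForm a b c k u y) v = 0) :
    (c - k * (√(1 - v ^ 2) / √(1 - u ^ 2))⁻¹) * v = b * u := by
  simp only [semicircleForm_swap a b c k u] at h
  rw [inv_div]
  exact mul_eq_of_deriv_semicircleForm_left_eq_zero hv h

lemma abs_lt_abs_of_sqrt_div_sqrt_lt_one (hu : u ∈ Ioo (-1) 1)
    (h : √(1 - v ^ 2) / √(1 - u ^ 2) < 1) : |u| < |v| := by
  have hu' := one_sub_sq_pos_of_mem_Ioo hu
  rw [div_lt_one (Real.sqrt_pos.2 hu'), Real.sqrt_lt_sqrt_iff_of_pos hu'] at h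
  exact sq_lt_sq.1 (by linarith)

lemma eq_zero_of_deriv_semicircleForm_eq_zero (hb : b ≠ 0)
    (hdet : ∀ r, 0 < r → (a - k * r) * (c - k * r⁻¹) = b ^ 2 → r < 1 ∧ |a - k * r| ≤ |b|)
    (hu : u ∈ Ioo (-1) 1) (hv : v ∈ Ioo (-1) 1)
    (hdu : deriv (fun x ↦ semicircleForm a b c k x v) u = 0)
    (hdv : deriv (fun y ↦ semicircleForm a b c k u y) v = 0) :
    u = 0 ∧ v = 0 := by
  have hu_eq := mul_eq_of_deriv_semicircleForm_left_eq_zero hu hdu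
  have hv_eq := mul_eq_of_deriv_semicircleForm_right_eq_zero hv hdv
  have hr : 0 < √(1 - v ^ 2) / √(1 - u ^ 2) :=
    div_pos (Real.sqrt_pos.2 (one_sub_sq_pos_of_mem_Ioo hv))
      (Real.sqrt_pos.2 (one_sub_sq_pos_of_mem_Ioo hu))
  have hlt := abs_lt_abs_of_sqrt_div_sqrt_lt_one (v := v) hu
  generalize √(1 - v ^ 2) / √(1 - u ^ 2) = r at hu_eq hv_eq hr hlt
  rcases eq_or_ne u 0 with rfl | hu0
  · exact ⟨rfl, by simpa [hb] using hu_eq.symm⟩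
  have hdet_eq : (a - k * r) * (c - k * r⁻¹) = b ^ 2 :=
    mul_right_cancel₀ hu0 (by linear_combination (c - k * r⁻¹) * hu_eq + b * hv_eq)
  obtain ⟨hr1, hab⟩ := hdet r hr hdet_eq
  have hle : |b| * |v| ≤ |b| * |u| := by
    calc |b| * |v| = |a - k * r| * |u| := by rw [← abs_mul, ← hu_eq, abs_mul]
      _ ≤ |b| * |u| := by gcongr
  exact absurd (le_of_mul_le_mul_left hle (abs_pos.2 hb)) (hlt hr1).not_ge

end SemicircleForm

/-- The function `Ff n lam` with the integer `n` replaced by a real parameter. -/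
noncomputable def FfReal (n lam : ℝ) : ℝ → ℝ → ℝ :=
  semicircleForm ((n + 1) ^ 2 * lam - 8 * n) ((n - 1) * ((n + 1) * lam - 2)) ((n - 1) ^ 2 * lam)
    (2 * (n - 1))

lemma Ff_eq_FfReal (n : ℕ) (lam : ℝ) : Ff n lam = FfReal n lam := by
  ext u v
  unfold Ff FfReal semicircleForm
  ring

section Parameters

variable {n lam w r : ℝ}

lemma sqrt_le_of_div_le (hn : 0 < n)
    (h : (3 * n + √(5 * n ^ 2 - 4 * n)) / (n ^ 2 + n) ≤ lam) :
    √(5 * n ^ 2 - 4 * n) ≤ n * ((n + 1) * lam) - 3 * n := by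
  rw [div_le_iff₀ (by positivity)] at h
  linarith

lemma four_le_of_sqrt_le (hn : 1 ≤ n) (h : √(5 * n ^ 2 - 4 * n) ≤ n * w - 3 * n) : 4 ≤ w := by
  have hsqrt : n ≤ √(5 * n ^ 2 - 4 * n) := Real.le_sqrt_of_sq_le (by nlinarith)
  exact le_of_mul_le_mul_left (by linarith) (zero_lt_one.trans_le hn)

lemma quadratic_nonneg_of_sqrt_le (hn : 0 < n) (h : √(5 * n ^ 2 - 4 * n) ≤ n * w - 3 * n) :
    0 ≤ n * w ^ 2 - 6 * n * w + 4 * n + 4 := by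
  have hsq := (Real.sqrt_le_iff.1 h).2
  exact nonneg_of_mul_nonneg_right (by linarith) hn

lemma mul_sq_eq_of_det_eq (hn : n ≠ 1) (hr : r ≠ 0)
    (h : ((n + 1) ^ 2 * lam - 8 * n - 2 * (n - 1) * r) *
        ((n - 1) ^ 2 * lam - 2 * (n - 1) * r⁻¹) = ((n - 1) * ((n + 1) * lam - 2)) ^ 2) :
    lam * ((n - 1) * (r + 1)) ^ 2 = 4 * n * (2 - lam) := by
  have hm : n - 1 ≠ 0 := sub_ne_zero.2 hn
  field_simp at h
  linear_combination -h / 2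

lemma sub_one_mul_add_one_le (hn : 1 ≤ n)
    (hlam : √(5 * n ^ 2 - 4 * n) ≤ n * ((n + 1) * lam) - 3 * n)
    (hr : lam * ((n - 1) * (r + 1)) ^ 2 = 4 * n * (2 - lam)) :
    (n - 1) * (r + 1) ≤ n * ((n + 1) * lam - 4) := by
  have hn0 : 0 < n := zero_lt_one.trans_le hn
  have hw : 4 ≤ (n + 1) * lam := four_le_of_sqrt_le hn hlam
  have hlam0 : 0 < lam := pos_of_mul_pos_right (by linarith) (by linarith : 0 ≤ n + 1)
  have hquad := quadratic_nonneg_of_sqrt_le hn0 hlam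
  have hfactor : (n + 1) * (lam * (n * ((n + 1) * lam - 4)) ^ 2 - 4 * n * (2 - lam)) =
      n * (((n + 1) * lam - 2) *
        (n * ((n + 1) * lam) ^ 2 - 6 * n * ((n + 1) * lam) + 4 * n + 4)) := by ring
  have hdiff : 0 ≤ lam * (n * ((n + 1) * lam - 4)) ^ 2 - 4 * n * (2 - lam) := by
    refine nonneg_of_mul_nonneg_right ?_ (by linarith : 0 < n + 1)
    rw [hfactor]
    exact mul_nonneg hn0.le (mul_nonneg (by linarith) hquad)
  refine le_of_sq_le_sq ?_ (mul_nonneg hn0.le (by linarith))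
  exact le_of_mul_le_mul_left (by linarith) hlam0

lemma lt_one_of_sub_one_mul_add_one_le (hn : 1 < n) (hlam : 0 ≤ lam)
    (hr : lam * ((n - 1) * (r + 1)) ^ 2 = 4 * n * (2 - lam))
    (hle : (n - 1) * (r + 1) ≤ n * ((n + 1) * lam - 4)) : r < 1 := by
  by_contra! hr1
  have htwo : (n - 1) * 2 ≤ (n - 1) * (r + 1) :=
    mul_le_mul_of_nonneg_left (by linarith) (by linarith)
  have hlower : 6 * n - 2 ≤ n * (n + 1) * lam := by linarith
  have hupper : (n ^ 2 - n + 1) * lam ≤ 2 * n := by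
    have hsq : lam * ((n - 1) * 2) ^ 2 ≤ lam * ((n - 1) * (r + 1)) ^ 2 := by
      gcongr
    linarith
  have hcombined : (n ^ 2 - n + 1) * (6 * n - 2) ≤ n * (n + 1) * (2 * n) := by
    calc (n ^ 2 - n + 1) * (6 * n - 2)
        ≤ (n ^ 2 - n + 1) * (n * (n + 1) * lam) :=
          mul_le_mul_of_nonneg_left hlower (by nlinarith)
      _ = n * (n + 1) * ((n ^ 2 - n + 1) * lam) := by ring
      _ ≤ n * (n + 1) * (2 * n) := mul_le_mul_of_nonneg_left hupper (by positivity)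
  have hgap : 0 < 2 * (n - 1) ^ 2 * (2 * n - 1) :=
    mul_pos (mul_pos two_pos (pow_pos (by linarith) 2)) (by linarith)
  linarith

lemma abs_le_abs_of_sub_one_mul_add_one_le (hn : 1 ≤ n) (hlam : 0 ≤ lam) (hr0 : 0 ≤ r)
    (hr : lam * ((n - 1) * (r + 1)) ^ 2 = 4 * n * (2 - lam))
    (hle : (n - 1) * (r + 1) ≤ n * ((n + 1) * lam - 4)) :
    |(n + 1) ^ 2 * lam - 8 * n - 2 * (n - 1) * r| ≤ |(n - 1) * ((n + 1) * lam - 2)| := by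
  have hA : (n + 1) ^ 2 * lam - 8 * n ≤ 0 := by
    calc (n + 1) ^ 2 * lam - 8 * n = -(lam * (n - 1) ^ 2 * (r ^ 2 + 2 * r)) := by
          linear_combination hr
      _ ≤ 0 := neg_nonpos.2 (by positivity)
  have hmr : 0 ≤ (n - 1) * r := mul_nonneg (sub_nonneg.2 hn) hr0
  rw [abs_of_nonpos (by linarith)]
  exact le_trans (by linarith) (le_abs_self _)

end Parameters

theorem F_only_critical_point_is_origin_general
    (n : ℝ) (hn : 1 < n) (lam : ℝ)
    (hlam : (3 * n + √(5 * n ^ 2 - 4 * n)) / (n ^ 2 + n) ≤ lam) :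
    (∀ u v : ℝ, u ∈ Ioo (-1 : ℝ) 1 → v ∈ Ioo (-1 : ℝ) 1 →
      deriv (fun x : ℝ ↦ FfReal n lam x v) u = 0 →
      deriv (fun y : ℝ ↦ FfReal n lam u y) v = 0 →
      (u, v) = (0, 0)) ∧
    FfReal n lam 0 0 = 4 * (n - 1) := by
  have hsqrt := sqrt_le_of_div_le (zero_lt_one.trans hn) hlam
  have hw : 4 ≤ (n + 1) * lam := four_le_of_sqrt_le hn.le hsqrt
  have hlam0 : 0 < lam := pos_of_mul_pos_right (by linarith) (by linarith : 0 ≤ n + 1)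
  have hb : (n - 1) * ((n + 1) * lam - 2) ≠ 0 := mul_ne_zero (by linarith) (by linarith)
  refine ⟨fun u v hu hv hdu hdv ↦ ?_, ?_⟩
  · refine Prod.mk_inj.2
      (eq_zero_of_deriv_semicircleForm_eq_zero hb (fun r hr hdet ↦ ?_) hu hv hdu hdv)
    have hroot := mul_sq_eq_of_det_eq hn.ne' hr.ne' hdet
    have hle := sub_one_mul_add_one_le hn.le hsqrt hroot
    exact ⟨lt_one_of_sub_one_mul_add_one_le hn hlam0.le hroot hle,
      abs_le_abs_of_sub_one_mul_add_one_le hn.le hlam0.le hr.le hroot hle⟩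
  · simp only [FfReal, semicircleForm]
    norm_num
    ring

theorem F_only_critical_point_is_origin
    (n : ℕ) (hn : 3 ≤ n) (lam : ℝ)
    (hlam1 : (3 * (n : ℝ) + Real.sqrt (5 * (n : ℝ) ^ 2 - 4 * n)) / ((n : ℝ) ^ 2 + n) ≤ lam)
    (hlam2 : lam < (6 * (n : ℝ) - 2) / ((n : ℝ) ^ 2 + n)) :
    (∀ u v : ℝ, u ∈ Set.Ioo (-1 : ℝ) 1 → v ∈ Set.Ioo (-1 : ℝ) 1 →
      deriv (fun x : ℝ => Ff n lam x v) u = 0 →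
      deriv (fun y : ℝ => Ff n lam u y) v = 0 →
      (u, v) = (0, 0)) ∧
    Ff n lam 0 0 = 4 * ((n : ℝ) - 1) := by
  rw [Ff_eq_FfReal]
  exact F_only_critical_point_is_origin_general n (by exact_mod_cast (by lia : 1 < n)) lam hlam1
end

section
/- Let n ≥ 3 be an integer and λ a real number with (3n + √(5n² − 4n))/(n² + n) ≤ λ < (6n − 2)/(n² + n). Then for all (u,v) ∈ [−1,1] × [−1,1], F_{n,λ}(u,v) ≤ 4λn² − 12n + 4. -/
/-!
The bound is the value of `F` at `(u, v) = (1, -1)`. With `s = √(1 - u²)`, `t = √(1 - v²)` and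
`μ = nλ`, the gap between the bound and `F` is a nonnegative multiple of `(u + v)²` plus twice the
quadratic form `((n + 1)μ - (5n - 1)) s² - 2(n - 1) s t + (n - 1)(μ - 1) t²`. The determinant of
this form is `(n - 1)((n + 1)μ² - 6nμ + 4n)`, and the lower bound on `λ` says precisely that `μ` is
at least the larger root of the second factor.
-/

theorem two_mul_mul_mul_le_of_sq_le_mul {R : Type*} [CommSemiring R] [LinearOrder R]
    [IsStrictOrderedRing R] [ExistsAddOfLE R] {a b c : R} (ha : 0 ≤ a) (hc : 0 ≤ c)
    (hb : b ^ 2 ≤ a * c) (s t : R) : 2 * b * s * t ≤ a * s ^ 2 + c * t ^ 2 := by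
  have hsq : (b * s * t) ^ 2 ≤ a * s ^ 2 * (c * t ^ 2) :=
    calc (b * s * t) ^ 2 = b ^ 2 * (s * t) ^ 2 := by ring
      _ ≤ a * c * (s * t) ^ 2 := mul_le_mul_of_nonneg_right hb (sq_nonneg _)
      _ = a * s ^ 2 * (c * t ^ 2) := by ring
  simpa only [mul_assoc] using
    two_mul_le_add_of_sq_le_mul (mul_nonneg ha (sq_nonneg s)) (mul_nonneg hc (sq_nonneg t)) hsq

theorem quadratic_nonneg_of_sqrt_le_s18 {a b c x : ℝ} (ha : 0 < a)
    (h : √(b ^ 2 - a * c) ≤ a * x + b) : 0 ≤ a * x ^ 2 + 2 * b * x + c := by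
  have hsq : b ^ 2 - a * c ≤ (a * x + b) ^ 2 := (Real.sqrt_le_iff.mp h).2
  refine nonneg_of_mul_nonneg_right (a := a) ?_ ha
  linear_combination hsq

/-- The threshold for `μ = nλ` in the hypothesis on `λ`, as a function of a real `x` in place of
`n`: the larger root of `(x + 1)μ² - 6xμ + 4x`. -/
noncomputable def muThreshold (x : ℝ) : ℝ :=
  (3 * x + √(5 * x ^ 2 - 4 * x)) / (x + 1)

section Threshold

variable {x μ : ℝ}

theorem quadratic_nonneg_of_muThreshold_le (hx : -1 < x) (hμ : muThreshold x ≤ μ) :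
    0 ≤ (x + 1) * μ ^ 2 - 6 * x * μ + 4 * x := by
  have hx1 : 0 < x + 1 := by linarith
  have hroot : √((-3 * x) ^ 2 - (x + 1) * (4 * x)) ≤ (x + 1) * μ + -3 * x := by
    rw [muThreshold, div_le_iff₀ hx1] at hμ
    rw [show (-3 * x) ^ 2 - (x + 1) * (4 * x) = 5 * x ^ 2 - 4 * x by ring]
    linarith
  linear_combination quadratic_nonneg_of_sqrt_le_s18 hx1 hroot

theorem five_mul_sub_one_le_of_muThreshold_le (hx : 1 ≤ x) (hμ : muThreshold x ≤ μ) :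
    5 * x - 1 ≤ (x + 1) * μ := by
  have hsqrt : 2 * x - 1 ≤ √(5 * x ^ 2 - 4 * x) := Real.le_sqrt_of_sq_le (by nlinarith)
  rw [muThreshold, div_le_iff₀ (by linarith)] at hμ
  linarith

theorem two_mul_sub_one_mul_mul_le_of_muThreshold_le (hx : 1 ≤ x) (hμ : muThreshold x ≤ μ)
    (s t : ℝ) :
    2 * (x - 1) * s * t
      ≤ ((x + 1) * μ - (5 * x - 1)) * s ^ 2 + (x - 1) * (μ - 1) * t ^ 2 := by
  have hlinear := five_mul_sub_one_le_of_muThreshold_le hx hμ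
  have hμ1 : 1 ≤ μ := by nlinarith
  have hdet : (x - 1) ^ 2 ≤ ((x + 1) * μ - (5 * x - 1)) * ((x - 1) * (μ - 1)) := by
    linear_combination
      mul_nonneg (sub_nonneg.mpr hx) (quadratic_nonneg_of_muThreshold_le (by linarith) hμ)
  exact two_mul_mul_mul_le_of_sq_le_mul (sub_nonneg.mpr hlinear)
    (mul_nonneg (sub_nonneg.mpr hx) (sub_nonneg.mpr hμ1)) hdet s t

end Threshold

theorem sub_Ff_eq (n : ℕ) (lam : ℝ) {u v : ℝ} (hu : u ∈ Set.Icc (-1) 1)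
    (hv : v ∈ Set.Icc (-1) 1) :
    4 * lam * (n : ℝ) ^ 2 - 12 * n + 4 - Ff n lam u v
      = (n - 1) * ((n + 1) * lam - 2) * (u + v) ^ 2
        + 2 * (((n + 1) * (n * lam) - (5 * n - 1)) * √(1 - u ^ 2) ^ 2
          + (n - 1) * (n * lam - 1) * √(1 - v ^ 2) ^ 2
          - 2 * (n - 1) * √(1 - u ^ 2) * √(1 - v ^ 2)) := by
  have hs : √(1 - u ^ 2) ^ 2 = 1 - u ^ 2 := Real.sq_sqrt (by nlinarith [hu.1, hu.2])
  have ht : √(1 - v ^ 2) ^ 2 = 1 - v ^ 2 := Real.sq_sqrt (by nlinarith [hv.1, hv.2])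
  rw [Ff, hs, ht]
  ring

theorem F_max_large_lambda_general {n : ℕ} (hn : 1 ≤ n) {lam : ℝ}
    (hlam : (3 * (n : ℝ) + √(5 * (n : ℝ) ^ 2 - 4 * n)) / ((n : ℝ) ^ 2 + n) ≤ lam)
    {u v : ℝ} (hu : u ∈ Set.Icc (-1) 1) (hv : v ∈ Set.Icc (-1) 1) :
    Ff n lam u v ≤ 4 * lam * (n : ℝ) ^ 2 - 12 * n + 4 := by
  have hn1 : (1 : ℝ) ≤ n := by exact_mod_cast hn
  have hμ : muThreshold n ≤ n * lam := by
    rw [div_le_iff₀ (by positivity)] at hlam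
    rw [muThreshold, div_le_iff₀ (by positivity)]
    linarith
  have hcoeff : 0 ≤ ((n : ℝ) + 1) * lam - 2 := by
    have hlinear := five_mul_sub_one_le_of_muThreshold_le hn1 hμ
    nlinarith
  have hsquare : 0 ≤ ((n : ℝ) - 1) * ((n + 1) * lam - 2) * (u + v) ^ 2 :=
    mul_nonneg (mul_nonneg (sub_nonneg.mpr hn1) hcoeff) (sq_nonneg _)
  have hform := two_mul_sub_one_mul_mul_le_of_muThreshold_le hn1 hμ
    √(1 - u ^ 2) √(1 - v ^ 2)
  linarith [sub_Ff_eq n lam hu hv]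

theorem F_max_large_lambda
    (n : ℕ) (hn : 3 ≤ n) (lam : ℝ)
    (hlam1 : (3 * (n : ℝ) + Real.sqrt (5 * (n : ℝ) ^ 2 - 4 * n)) / ((n : ℝ) ^ 2 + n) ≤ lam)
    (hlam2 : lam < (6 * (n : ℝ) - 2) / ((n : ℝ) ^ 2 + n)) :
    ∀ u v : ℝ, u ∈ Set.Icc (-1 : ℝ) 1 → v ∈ Set.Icc (-1 : ℝ) 1 →
      Ff n lam u v ≤ 4 * lam * (n : ℝ) ^ 2 - 12 * n + 4 :=
  fun _ _ hu hv ↦ F_max_large_lambda_general (by omega) hlam1 hu hv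
end
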